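/- arXiv:2409.12872 — 15 statements merged into one kernel-verified Lean document; each statement's English description precedes it below -/
import Mathlib

section
/- Let E be a C*-algebra, J ⊆ E a closed two-sided ideal, and (hₙ)ₙ a quasicentral approximate unit for J relative to E. Then for all a, b ∈ E with ab = 0, one has ‖(hₙ^{1/2} a hₙ^{1/2})(hₙ^{1/2} b hₙ^{1/2})‖ → 0 as n → ∞. (Thus the maps αₙ(a) = hₙ^{1/2} a hₙ^{1/2} appearing in the Brake–Winter decomposition are asymptotically order zero.) -/
/-!
Write `s = h^{1/2}`. The product equals `s * a * h * b * s`, and since `a * b = 0` this is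
`s * (a * h - h * a) * b * s`. As `‖s‖ ^ 2 = ‖h‖ ≤ 1`, its norm is at most `‖h * a - a * h‖ * ‖b‖`,
which tends to zero. Only commutators with `h` itself occur, so asymptotic centrality of the square
roots is not needed.
-/

open Filter Topology

/-- Let `E` be a C*-algebra, `J ⊆ E` a closed two-sided ideal, and `(hₙ)` a
quasicentral approximate unit for `J` relative to `E`. Then for all `a b ∈ E` with `a * b = 0`,
`‖(hₙ^{1/2} a hₙ^{1/2}) (hₙ^{1/2} b hₙ^{1/2})‖ → 0`. -/
theorem brakeWinter_alpha_asymptotically_orderZero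
    {E : Type*} [NonUnitalCStarAlgebra E] [PartialOrder E] [StarOrderedRing E]
    (J : TwoSidedIdeal E) (hJclosed : IsClosed (J : Set E))
    (h : ℕ → E)
    (h_mem : ∀ n, h n ∈ J)
    (h_pos : ∀ n, 0 ≤ h n)
    (h_contr : ∀ n, ‖h n‖ ≤ 1)
    (h_mono : ∀ n, h n ≤ h (n + 1))
    (h_approx : ∀ x, x ∈ J → Tendsto (fun n => ‖h n * x - x‖) atTop (𝓝 0))
    (h_quasi : ∀ a : E, Tendsto (fun n => ‖h n * a - a * h n‖) atTop (𝓝 0))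
    (a b : E) (hab : a * b = 0) :
    Tendsto (fun n => ‖(CFC.sqrt (h n) * a * CFC.sqrt (h n)) *
      (CFC.sqrt (h n) * b * CFC.sqrt (h n))‖) atTop (𝓝 0) := by
  have key : ∀ n, ‖(CFC.sqrt (h n) * a * CFC.sqrt (h n)) *
      (CFC.sqrt (h n) * b * CFC.sqrt (h n))‖ ≤ ‖h n * a - a * h n‖ * ‖b‖ := by
    intro n
    have hss : CFC.sqrt (h n) * CFC.sqrt (h n) = h n := CFC.sqrt_mul_sqrt_self (h n) (h_pos n)
    have hsa : star (CFC.sqrt (h n)) = CFC.sqrt (h n) :=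
      (IsSelfAdjoint.of_nonneg (CFC.sqrt_nonneg (h n))).star_eq
    have hnorm : ‖CFC.sqrt (h n)‖ ≤ 1 := by
      have h1 := CStarRing.norm_star_mul_self (x := CFC.sqrt (h n))
      rw [hsa, hss] at h1
      nlinarith [h_contr n, norm_nonneg (CFC.sqrt (h n))]
    generalize CFC.sqrt (h n) = s at hss hnorm ⊢
    have heq : (s * a * s) * (s * b * s) = s * ((a * h n - h n * a) * b) * s := by
      rw [sub_mul, mul_assoc (h n) a b, hab, mul_zero, sub_zero, ← hss]
      simp only [mul_assoc]
    calc ‖(s * a * s) * (s * b * s)‖ = ‖s * ((a * h n - h n * a) * b) * s‖ := by rw [heq]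
      _ ≤ ‖s * ((a * h n - h n * a) * b)‖ * ‖s‖ := norm_mul_le _ _
      _ ≤ ‖s * ((a * h n - h n * a) * b)‖ := mul_le_of_le_one_right (norm_nonneg _) hnorm
      _ ≤ ‖s‖ * ‖(a * h n - h n * a) * b‖ := norm_mul_le _ _
      _ ≤ ‖(a * h n - h n * a) * b‖ := mul_le_of_le_one_left (norm_nonneg _) hnorm
      _ ≤ ‖a * h n - h n * a‖ * ‖b‖ := norm_mul_le _ _
      _ = ‖h n * a - a * h n‖ * ‖b‖ := by rw [norm_sub_rev]
  exact squeeze_zero (fun n => norm_nonneg _) key (by simpa using (h_quasi a).mul_const ‖b‖)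
end

section
/- Let E be a C*-algebra, J ⊆ E a closed two-sided ideal, and (hₙ)ₙ a quasicentral approximate unit for J relative to E; set kₙ = h_{n+1} − hₙ (a positive contraction). Then for all a₁, a₂ ∈ E with a₁a₂ ∈ J, one has ‖(kₙ^{1/2} a₁ kₙ^{1/2})(kₙ^{1/2} a₂ kₙ^{1/2})‖ → 0 as n → ∞. (In particular, if μ : E/J → E lifts a splitting of the quotient map and f₁, f₂ ∈ E/J satisfy f₁f₂ = 0, then the maps βₙ(f) = kₙ^{1/2} μ(f) kₙ^{1/2} of the Brake–Winter decomposition are asymptotically order zero.) -/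
open Filter Topology

/-!
Write `k = h (n + 1) - h n`. Since `CFC.sqrt k` squares to `k`, the product in question equals
`CFC.sqrt k * (a₁ * k * a₂) * CFC.sqrt k`, whose norm is at most `‖k‖ * ‖a₁ * k * a₂‖` by the
C*-identity, and `‖k‖ ≤ 2`. The middle factor is
`a₁ * k * a₂ = k * (a₁ * a₂) - (k * a₁ - a₁ * k) * a₂`: its first term tends to `0` because
`(h n)` is an approximate unit for `J ∋ a₁ * a₂`, its second because `(h n)` is quasicentral.
In particular no commutation estimate for the square roots is needed.
-/

/-- With `(hₙ)` a quasicentral approximate unit for `J` relative to `E` and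
`kₙ = h_{n+1} − hₙ`, for all `a₁ a₂ ∈ E` with `a₁a₂ ∈ J` one has
`‖(kₙ^{1/2} a₁ kₙ^{1/2})(kₙ^{1/2} a₂ kₙ^{1/2})‖ → 0`. -/
theorem brakeWinter_beta_asymptotically_orderZero
    {E : Type*} [NonUnitalCStarAlgebra E] [PartialOrder E] [StarOrderedRing E]
    (J : TwoSidedIdeal E) (hJclosed : IsClosed (J : Set E))
    (h : ℕ → E)
    (h_mem : ∀ n, h n ∈ J)
    (h_pos : ∀ n, 0 ≤ h n)
    (h_contr : ∀ n, ‖h n‖ ≤ 1)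
    (h_mono : ∀ n, h n ≤ h (n + 1))
    (h_approx : ∀ x, x ∈ J → Tendsto (fun n => ‖h n * x - x‖) atTop (𝓝 0))
    (h_quasi : ∀ a : E, Tendsto (fun n => ‖h n * a - a * h n‖) atTop (𝓝 0))
    (a₁ a₂ : E) (ha : a₁ * a₂ ∈ J) :
    Tendsto (fun n =>
      ‖(CFC.sqrt (h (n + 1) - h n) * a₁ * CFC.sqrt (h (n + 1) - h n)) *
        (CFC.sqrt (h (n + 1) - h n) * a₂ * CFC.sqrt (h (n + 1) - h n))‖) atTop (𝓝 0) := by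
  have hd : ∀ {f : ℕ → E}, Tendsto (fun n => ‖f n‖) atTop (𝓝 0) →
      Tendsto (fun n => f (n + 1) - f n) atTop (𝓝 0) := by
    intro f hf
    have hf' := tendsto_zero_iff_norm_tendsto_zero.mpr hf
    simpa using (hf'.comp (tendsto_add_atTop_nat 1)).sub hf'
  have hkx : Tendsto (fun n => (h (n + 1) - h n) * (a₁ * a₂)) atTop (𝓝 0) := by
    refine (hd (h_approx _ ha)).congr fun n => ?_
    noncomm_ring
  have hcomm : Tendsto (fun n => ((h (n + 1) - h n) * a₁ - a₁ * (h (n + 1) - h n)) * a₂)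
      atTop (𝓝 0) := by
    have := (hd (h_quasi a₁)).mul_const a₂
    rw [zero_mul] at this
    refine this.congr fun n => ?_
    noncomm_ring
  have hmid : Tendsto (fun n => ‖a₁ * (h (n + 1) - h n) * a₂‖) atTop (𝓝 0) := by
    have := hkx.sub hcomm
    rw [sub_zero] at this
    refine tendsto_zero_iff_norm_tendsto_zero.mp (this.congr fun n => ?_)
    noncomm_ring
  have hlim : Tendsto (fun n => 2 * ‖a₁ * (h (n + 1) - h n) * a₂‖) atTop (𝓝 0) := by
    simpa using hmid.const_mul 2
  refine squeeze_zero (fun n => norm_nonneg _) (fun n => ?_) hlim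
  have hk : 0 ≤ h (n + 1) - h n := sub_nonneg.mpr (h_mono n)
  have hk2 : ‖h (n + 1) - h n‖ ≤ 2 := by
    linarith [norm_sub_le (h (n + 1)) (h n), h_contr n, h_contr (n + 1)]
  generalize h (n + 1) - h n = k at hk hk2 ⊢
  have hss : CFC.sqrt k * CFC.sqrt k = k := CFC.sqrt_mul_sqrt_self k hk
  have hsa : IsSelfAdjoint (CFC.sqrt k) := (CFC.sqrt_nonneg k).isSelfAdjoint
  have hnorm : ‖CFC.sqrt k‖ * ‖CFC.sqrt k‖ = ‖k‖ := by
    rw [← CStarRing.norm_star_mul_self, hsa.star_eq, hss]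
  have hprod : CFC.sqrt k * a₁ * CFC.sqrt k * (CFC.sqrt k * a₂ * CFC.sqrt k)
      = CFC.sqrt k * (a₁ * k * a₂) * CFC.sqrt k := by
    have hmk : a₁ * k * a₂ = a₁ * (CFC.sqrt k * CFC.sqrt k) * a₂ := by rw [hss]
    rw [hmk]
    simp only [mul_assoc]
  calc _ = ‖CFC.sqrt k * (a₁ * k * a₂) * CFC.sqrt k‖ := by rw [hprod]
    _ ≤ ‖CFC.sqrt k‖ * ‖a₁ * k * a₂‖ * ‖CFC.sqrt k‖ :=
        (norm_mul_le _ _).trans (mul_le_mul_of_nonneg_right (norm_mul_le _ _) (norm_nonneg _))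
    _ = ‖k‖ * ‖a₁ * k * a₂‖ := by rw [← hnorm]; ring
    _ ≤ 2 * ‖a₁ * k * a₂‖ := by gcongr
end

section
/- Let E be a C*-algebra, J ⊆ E a closed two-sided ideal, and (hₙ)ₙ a quasicentral approximate unit for J relative to E. Then for all a₁, a₂ ∈ E with a₁a₂ ∈ J, one has ‖((1−h_{n+1})^{1/2} a₁ (1−h_{n+1})^{1/2})((1−h_{n+1})^{1/2} a₂ (1−h_{n+1})^{1/2})‖ → 0 as n → ∞, where the expressions involving 1 − h_{n+1} are computed in the minimal unitization of E (the displayed products lie in E). (Thus the maps γₙ(f) = (1−h_{n+1})^{1/2} μ(f) (1−h_{n+1})^{1/2} of the Brake–Winter decomposition, for μ a lift of a splitting, are asymptotically order zero.) -/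
/-!
Write `k = 1 - h` and `s = k^{1/2}` for a positive contraction `h`, so that `s` is a contraction with
`s * s = k`. The product in question is then `s * (a₁ * k * a₂) * s`, and `a₁ * k * a₂` lies in `E`,
where it equals `-(h * a₁ * a₂ - a₁ * a₂) + (h * a₁ - a₁ * h) * a₂`.
The first summand is small because `a₁ * a₂ ∈ J` and `h` runs through an approximate unit of `J`, the
second because the approximate unit is quasicentral. No commutator with the square root `s` has to
be estimated, since the two inner square roots multiply to `k`.
-/

open Filter Topology

/-- Quantitative form for a single positive contraction: the norm of the product is controlled by
the defect of `h` as a unit for `a₁ * a₂` and by its commutator with `a₁`. -/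
lemma norm_sqrt_one_sub_sandwich_mul_le
    {E : Type*} [NonUnitalCStarAlgebra E] [PartialOrder E] [StarOrderedRing E]
    (h : E) (h_pos : 0 ≤ h) (h_contr : ‖h‖ ≤ 1) (a₁ a₂ : E) :
    ‖(CFC.sqrt ((1 : Unitization ℂ E) - (h : Unitization ℂ E)) *
          (a₁ : Unitization ℂ E) *
          CFC.sqrt ((1 : Unitization ℂ E) - (h : Unitization ℂ E))) *
        (CFC.sqrt ((1 : Unitization ℂ E) - (h : Unitization ℂ E)) *
          (a₂ : Unitization ℂ E) *
          CFC.sqrt ((1 : Unitization ℂ E) - (h : Unitization ℂ E)))‖ ≤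
      ‖h * (a₁ * a₂) - a₁ * a₂‖ + ‖h * a₁ - a₁ * h‖ * ‖a₂‖ := by
  have hu_pos : (0 : Unitization ℂ E) ≤ (h : Unitization ℂ E) :=
    Unitization.inr_nonneg_iff.mpr h_pos
  have hu_le : (h : Unitization ℂ E) ≤ 1 := by
    rw [← CStarAlgebra.norm_le_one_iff_of_nonneg _ hu_pos, Unitization.norm_inr]
    exact h_contr
  have hk_pos : (0 : Unitization ℂ E) ≤ 1 - (h : Unitization ℂ E) := sub_nonneg.mpr hu_le
  have hk_norm : ‖(1 : Unitization ℂ E) - (h : Unitization ℂ E)‖ ≤ 1 :=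
    (CStarAlgebra.norm_le_one_iff_of_nonneg _ hk_pos).mpr (sub_le_self _ hu_pos)
  have hss := CFC.sqrt_mul_sqrt_self ((1 : Unitization ℂ E) - (h : Unitization ℂ E)) hk_pos
  have hs_sa : star (CFC.sqrt ((1 : Unitization ℂ E) - (h : Unitization ℂ E))) =
      CFC.sqrt ((1 : Unitization ℂ E) - (h : Unitization ℂ E)) :=
    (IsSelfAdjoint.of_nonneg (CFC.sqrt_nonneg _)).star_eq
  generalize CFC.sqrt ((1 : Unitization ℂ E) - (h : Unitization ℂ E)) = s at hss hs_sa ⊢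
  have hs_norm : ‖s‖ ≤ 1 := by
    have hsq : ‖s * star s‖ = ‖s‖ * ‖s‖ := CStarRing.norm_self_mul_star
    rw [hs_sa, hss] at hsq
    nlinarith [norm_nonneg s]
  have h_split : (s * (a₁ : Unitization ℂ E) * s) * (s * (a₂ : Unitization ℂ E) * s) =
      s * ((-(h * (a₁ * a₂) - a₁ * a₂) + (h * a₁ - a₁ * h) * a₂ : E) : Unitization ℂ E) * s := by
    calc (s * (a₁ : Unitization ℂ E) * s) * (s * (a₂ : Unitization ℂ E) * s)
        = s * (a₁ * (s * s) * a₂) * s := by noncomm_ring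
      _ = _ := by
        rw [hss]
        simp only [Unitization.inr_add, Unitization.inr_neg, Unitization.inr_sub,
          Unitization.inr_mul]
        noncomm_ring
  rw [h_split]
  generalize hy : -(h * (a₁ * a₂) - a₁ * a₂) + (h * a₁ - a₁ * h) * a₂ = y
  calc ‖s * (y : Unitization ℂ E) * s‖ ≤ ‖s‖ * ‖(y : Unitization ℂ E)‖ * ‖s‖ := norm_mul₃_le
    _ ≤ 1 * ‖(y : Unitization ℂ E)‖ * 1 := by gcongr
    _ = ‖y‖ := by rw [one_mul, mul_one, Unitization.norm_inr]
    _ ≤ ‖h * (a₁ * a₂) - a₁ * a₂‖ + ‖h * a₁ - a₁ * h‖ * ‖a₂‖ := by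
      rw [← hy]
      refine (norm_add_le _ _).trans ?_
      rw [norm_neg]
      gcongr
      exact norm_mul_le _ _

/-- With `(hₙ)` a quasicentral approximate unit for `J` relative to `E`, for all
`a₁ a₂ ∈ E` with `a₁a₂ ∈ J` one has
`‖((1−h_{n+1})^{1/2} a₁ (1−h_{n+1})^{1/2})((1−h_{n+1})^{1/2} a₂ (1−h_{n+1})^{1/2})‖ → 0`,
the expressions involving `1 − h_{n+1}` being computed in the minimal unitization of `E`. -/
theorem brakeWinter_gamma_asymptotically_orderZero
    {E : Type*} [NonUnitalCStarAlgebra E] [PartialOrder E] [StarOrderedRing E]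
    (J : TwoSidedIdeal E) (hJclosed : IsClosed (J : Set E))
    (h : ℕ → E)
    (h_mem : ∀ n, h n ∈ J)
    (h_pos : ∀ n, 0 ≤ h n)
    (h_contr : ∀ n, ‖h n‖ ≤ 1)
    (h_mono : ∀ n, h n ≤ h (n + 1))
    (h_approx : ∀ x, x ∈ J → Tendsto (fun n => ‖h n * x - x‖) atTop (𝓝 0))
    (h_quasi : ∀ a : E, Tendsto (fun n => ‖h n * a - a * h n‖) atTop (𝓝 0))
    (a₁ a₂ : E) (ha : a₁ * a₂ ∈ J) :
    Tendsto (fun n =>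
      ‖(CFC.sqrt ((1 : Unitization ℂ E) - (h (n + 1) : Unitization ℂ E)) *
          (a₁ : Unitization ℂ E) *
          CFC.sqrt ((1 : Unitization ℂ E) - (h (n + 1) : Unitization ℂ E))) *
        (CFC.sqrt ((1 : Unitization ℂ E) - (h (n + 1) : Unitization ℂ E)) *
          (a₂ : Unitization ℂ E) *
          CFC.sqrt ((1 : Unitization ℂ E) - (h (n + 1) : Unitization ℂ E)))‖) atTop (𝓝 0) := by
  have h_bound : Tendsto (fun n => ‖h n * (a₁ * a₂) - a₁ * a₂‖ + ‖h n * a₁ - a₁ * h n‖ * ‖a₂‖)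
      atTop (𝓝 0) := by
    simpa using (h_approx _ ha).add ((h_quasi a₁).mul_const ‖a₂‖)
  exact squeeze_zero (fun _ => norm_nonneg _)
    (fun n => norm_sqrt_one_sub_sandwich_mul_le _ (h_pos (n + 1)) (h_contr (n + 1)) a₁ a₂)
    (h_bound.comp (tendsto_add_atTop_nat 1))
end

section
/- Let E be a C*-algebra, J ⊆ E a closed two-sided ideal, and (hₙ)ₙ a quasicentral approximate unit for J relative to E. Then for all a, b ∈ E with a − b ∈ J, one has ‖a − hₙ^{1/2} a hₙ^{1/2} − (h_{n+1}−hₙ)^{1/2} b (h_{n+1}−hₙ)^{1/2} − (1−h_{n+1})^{1/2} b (1−h_{n+1})^{1/2}‖ → 0 as n → ∞, where expressions involving 1 − h_{n+1} are computed in the minimal unitization of E. (This is the Brake–Winter decomposition identity α(a) + β(π(a)) + γ(π(a)) = a, with b = μ(π(a)) any lift of the image of a in E/J.) -/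
/-!
Work in the unitization and put `d = h (n + 1) - h n`, `e = 1 - h (n + 1)`, so that
`h n + d + e = 1` and each of the three summands is a positive contraction that asymptotically
commutes with every element of `E`. Approximating the square root uniformly on `[0, 1]` by
polynomials shows that the square roots of `h n`, `d`, `e` asymptotically commute with `a` and `b`
as well (`tendsto_sqrt_mul_commutator`). Hence the sum of the three compressions is asymptotically
`h n * a + d * b + e * b = b + h n * (a - b)`, which tends to `a` because `a - b ∈ J`.
-/

open Filter Topology

/-- For a fixed polynomial `q`, the elements `q (p n)` asymptotically commute with everything
that the bounded sequence `p` asymptotically commutes with. -/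
lemma tendsto_aeval_commutator {A : Type*} [CStarAlgebra A]
    (p : ℕ → A) (hp : ∀ n, ‖p n‖ ≤ 1) (a : A)
    (hc : Tendsto (fun n => p n * a - a * p n) atTop (𝓝 0)) (q : Polynomial ℝ) :
    Tendsto (fun n => Polynomial.aeval (p n) q * a - a * Polynomial.aeval (p n) q)
      atTop (𝓝 0) := by
  induction q using Polynomial.induction_on' with
  | add q r hq hr =>
    refine (by simpa using hq.add hr : Tendsto _ atTop (𝓝 (0 : A))).congr fun n => ?_
    simp only [map_add]
    noncomm_ring
  | monomial k c =>
    have key : Tendsto (fun n => p n ^ k * a - a * p n ^ k) atTop (𝓝 0) := by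
      induction k with
      | zero => simp
      | succ k ih =>
        -- Leibniz rule: `[p ^ (k + 1), a] = [p ^ k, a] p + p ^ k [p, a]`.
        have h1 : Tendsto (fun n => (p n ^ k * a - a * p n ^ k) * p n) atTop (𝓝 0) := by
          refine squeeze_zero_norm (fun n => ?_) (tendsto_norm_zero.comp ih)
          exact (norm_mul_le _ _).trans (mul_le_of_le_one_right (norm_nonneg _) (hp n))
        have h2 : Tendsto (fun n => p n ^ k * (p n * a - a * p n)) atTop (𝓝 0) := by
          refine squeeze_zero_norm (a := fun n => ‖(1 : A)‖ * ‖p n * a - a * p n‖)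
            (fun n => ?_) (by simpa using (tendsto_norm_zero.comp hc).const_mul ‖(1 : A)‖)
          refine (norm_mul_le _ _).trans (mul_le_mul_of_nonneg_right ?_ (norm_nonneg _))
          rcases subsingleton_or_nontrivial A with hA | hA
          · simp [Subsingleton.elim (p n ^ k) 0]
          · simpa using (norm_pow_le (p n) k).trans (pow_le_one₀ (norm_nonneg _) (hp n))
        refine (by simpa using h1.add h2 : Tendsto _ atTop (𝓝 (0 : A))).congr fun n => ?_
        rw [pow_succ]
        noncomm_ring
    refine (by simpa using key.const_smul c : Tendsto _ atTop (𝓝 (0 : A))).congr fun n => ?_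
    simp [Polynomial.aeval_monomial, ← Algebra.smul_def, smul_sub]

/-- Positive contractions asymptotically commuting with `a` have square roots asymptotically
commuting with `a`; the commutator is multiplied by the (contractive) square root, which is
the form used below. -/
lemma tendsto_sqrt_mul_commutator {A : Type*} [CStarAlgebra A] [PartialOrder A] [StarOrderedRing A]
    (p : ℕ → A) (hp0 : ∀ n, 0 ≤ p n) (hp : ∀ n, ‖p n‖ ≤ 1) (a : A)
    (hc : Tendsto (fun n => p n * a - a * p n) atTop (𝓝 0)) :
    Tendsto (fun n => CFC.sqrt (p n) * (CFC.sqrt (p n) * a - a * CFC.sqrt (p n)))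
      atTop (𝓝 0) := by
  have hspec : ∀ n, ∀ x ∈ spectrum ℝ (p n), x ∈ Set.Icc (0 : ℝ) 1 := fun n x hx => by
    have : Nontrivial A := by
      by_contra hA
      rw [not_nontrivial_iff_subsingleton] at hA
      simp [spectrum.of_subsingleton] at hx
    exact ⟨spectrum_nonneg_of_nonneg (hp0 n) hx,
      (le_abs_self x).trans ((spectrum.norm_le_norm_of_mem hx).trans (hp n))⟩
  have hsqrt : ∀ n, CFC.sqrt (p n) = cfc Real.sqrt (p n) := fun n => by
    rw [CFC.sqrt_eq_real_sqrt (p n) (hp0 n), cfcₙ_eq_cfc]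
  have hnorm : ∀ n, ‖CFC.sqrt (p n)‖ ≤ 1 := fun n => by
    rw [hsqrt]
    refine norm_cfc_le zero_le_one fun x hx => ?_
    rw [Real.norm_of_nonneg (Real.sqrt_nonneg x)]
    exact Real.sqrt_le_one.2 (hspec n x hx).2
  have hcomm : Tendsto (fun n => CFC.sqrt (p n) * a - a * CFC.sqrt (p n)) atTop (𝓝 0) := by
    rw [Metric.tendsto_atTop]
    intro ε hε
    -- The approximation error enters twice, each time multiplied by `a`.
    set δ : ℝ := ε / (4 * (‖a‖ + 1)) with hδ
    have hδ0 : 0 < δ := by positivity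
    obtain ⟨q, hq⟩ := exists_polynomial_near_of_continuousOn 0 1 Real.sqrt
      Real.continuous_sqrt.continuousOn δ hδ0
    obtain ⟨N, hN⟩ := Metric.tendsto_atTop.1 (tendsto_aeval_commutator p hp a hc q) (ε / 2)
      (by positivity)
    refine ⟨N, fun n hn => ?_⟩
    have h1 := hN n hn
    rw [dist_zero_right] at h1 ⊢
    set x := Polynomial.aeval (p n) q with hx
    have h2 : ‖CFC.sqrt (p n) - x‖ ≤ δ := by
      have hsa : IsSelfAdjoint (p n) := (hp0 n).isSelfAdjoint
      rw [hsqrt, hx, ← cfc_polynomial q (p n) hsa,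
        ← cfc_sub Real.sqrt (fun x => Polynomial.eval x q) (p n)
          Real.continuous_sqrt.continuousOn q.continuous.continuousOn]
      refine norm_cfc_le hδ0.le fun y hy => ?_
      rw [Real.norm_eq_abs, abs_sub_comm]
      exact (hq y (hspec n y hy)).le
    have h3 : CFC.sqrt (p n) * a - a * CFC.sqrt (p n)
        = (x * a - a * x) + ((CFC.sqrt (p n) - x) * a - a * (CFC.sqrt (p n) - x)) := by
      noncomm_ring
    have h4 : ‖(CFC.sqrt (p n) - x) * a - a * (CFC.sqrt (p n) - x)‖ ≤ δ * ‖a‖ + ‖a‖ * δ :=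
      (norm_sub_le _ _).trans (add_le_add
        ((norm_mul_le _ _).trans (by gcongr)) ((norm_mul_le _ _).trans (by gcongr)))
    have h5 : δ * (4 * (‖a‖ + 1)) = ε := by
      rw [hδ]
      field_simp
    rw [h3]
    refine (norm_add_le _ _).trans_lt ?_
    nlinarith
  refine squeeze_zero_norm (fun n => ?_) (tendsto_norm_zero.comp hcomm)
  exact (norm_mul_le _ _).trans (mul_le_of_le_one_left (norm_nonneg _) (hnorm n))

lemma inr_sqrt {E : Type*} [NonUnitalCStarAlgebra E] [PartialOrder E] [StarOrderedRing E]
    (x : E) (hx : 0 ≤ x) :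
    ((CFC.sqrt x : E) : Unitization ℂ E) = CFC.sqrt (x : Unitization ℂ E) := by
  refine (CFC.sqrt_unique ?_ (Unitization.inr_nonneg_iff.2 (CFC.sqrt_nonneg x))).symm
  rw [← Unitization.inr_mul, CFC.sqrt_mul_sqrt_self x hx]



/-- The Brake–Winter decomposition identity: with `(hₙ)` a quasicentral
approximate unit for `J` relative to `E`, for all `a b ∈ E` with `a − b ∈ J`,
`‖a − hₙ^{1/2} a hₙ^{1/2} − (h_{n+1}−hₙ)^{1/2} b (h_{n+1}−hₙ)^{1/2}
  − (1−h_{n+1})^{1/2} b (1−h_{n+1})^{1/2}‖ → 0`,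
expressions involving `1 − h_{n+1}` being computed in the minimal unitization of `E`. -/
theorem brakeWinter_decomposition_identity
    {E : Type*} [NonUnitalCStarAlgebra E] [PartialOrder E] [StarOrderedRing E]
    (J : TwoSidedIdeal E) (hJclosed : IsClosed (J : Set E))
    (h : ℕ → E)
    (h_mem : ∀ n, h n ∈ J)
    (h_pos : ∀ n, 0 ≤ h n)
    (h_contr : ∀ n, ‖h n‖ ≤ 1)
    (h_mono : ∀ n, h n ≤ h (n + 1))
    (h_approx : ∀ x, x ∈ J → Tendsto (fun n => ‖h n * x - x‖) atTop (𝓝 0))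
    (h_quasi : ∀ a : E, Tendsto (fun n => ‖h n * a - a * h n‖) atTop (𝓝 0))
    (a b : E) (hab : a - b ∈ J) :
    Tendsto (fun n =>
      ‖((a - CFC.sqrt (h n) * a * CFC.sqrt (h n)
          - CFC.sqrt (h (n + 1) - h n) * b * CFC.sqrt (h (n + 1) - h n) : E) : Unitization ℂ E)
        - CFC.sqrt ((1 : Unitization ℂ E) - (h (n + 1) : Unitization ℂ E)) *
            (b : Unitization ℂ E) *
            CFC.sqrt ((1 : Unitization ℂ E) - (h (n + 1) : Unitization ℂ E))‖) atTop (𝓝 0) := by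
  have hd0 : ∀ n, 0 ≤ h (n + 1) - h n := fun n => sub_nonneg.2 (h_mono n)
  have hdn : ∀ n, ‖h (n + 1) - h n‖ ≤ 1 := fun n =>
    (CStarAlgebra.norm_le_norm_of_nonneg_of_le (hd0 n)
      (sub_le_self _ (h_pos n))).trans (h_contr (n + 1))
  have hi0 : ∀ n, (0 : Unitization ℂ E) ≤ h n := fun n => Unitization.inr_nonneg_iff.2 (h_pos n)
  have he0 : ∀ n, (0 : Unitization ℂ E) ≤ 1 - (h (n + 1) : Unitization ℂ E) := fun n =>
    sub_nonneg.2 ((CStarAlgebra.norm_le_one_iff_of_nonneg _ (hi0 _)).1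
      (by rw [Unitization.norm_inr]; exact h_contr _))
  have hen : ∀ n, ‖(1 : Unitization ℂ E) - (h (n + 1) : Unitization ℂ E)‖ ≤ 1 := fun n =>
    (CStarAlgebra.norm_le_one_iff_of_nonneg _ (he0 n)).2 (sub_le_self _ (hi0 _))
  have hq : ∀ c : E, Tendsto (fun n => (h n : Unitization ℂ E) * c - c * h n) atTop (𝓝 0) := by
    intro c
    rw [tendsto_zero_iff_norm_tendsto_zero]
    refine (h_quasi c).congr fun n => ?_
    rw [← Unitization.norm_inr (𝕜 := ℂ)]
    simp
  have hq' := fun c : E => (hq c).comp (tendsto_add_atTop_nat 1)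
  have T1 := tendsto_sqrt_mul_commutator (fun n => (h n : Unitization ℂ E)) hi0
    (fun n => by rw [Unitization.norm_inr]; exact h_contr n) a (hq a)
  have T2 := tendsto_sqrt_mul_commutator
    (fun n => ((h (n + 1) - h n : E) : Unitization ℂ E))
    (fun n => Unitization.inr_nonneg_iff.2 (hd0 n))
    (fun n => by rw [Unitization.norm_inr]; exact hdn n) b (by
      refine (by simpa using (hq' b).sub (hq b) : Tendsto _ atTop (𝓝 (0 : Unitization ℂ E))).congr fun n => ?_
      simp only [Unitization.inr_sub]
      noncomm_ring)
  have T3 := tendsto_sqrt_mul_commutator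
    (fun n => (1 : Unitization ℂ E) - (h (n + 1) : Unitization ℂ E)) he0 hen b (by
      refine (by simpa using (hq' b).neg : Tendsto _ atTop (𝓝 (0 : Unitization ℂ E))).congr fun n => ?_
      noncomm_ring)
  have T4 : Tendsto (fun n => ((h n * (a - b) - (a - b) : E) : Unitization ℂ E))
      atTop (𝓝 0) := by
    rw [tendsto_zero_iff_norm_tendsto_zero]
    refine (h_approx _ hab).congr fun n => ?_
    rw [Unitization.norm_inr]
  rw [← tendsto_zero_iff_norm_tendsto_zero]
  refine (by simpa using ((T1.add T2).add T3).sub T4 : Tendsto _ atTop (𝓝 (0 : Unitization ℂ E))).congr fun n => ?_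
  have e1 := CFC.sqrt_mul_sqrt_self _ (hi0 n)
  have e2 := CFC.sqrt_mul_sqrt_self _ (Unitization.inr_nonneg_iff.2 (hd0 n))
  have e3 := CFC.sqrt_mul_sqrt_self _ (he0 n)
  have i1 := inr_sqrt _ (h_pos n)
  have i2 := inr_sqrt _ (hd0 n)
  simp only [Unitization.inr_sub, Unitization.inr_mul, i1, i2] at e1 e2 e3 ⊢
  simp only [mul_sub, ← mul_assoc, e1, e2, e3]
  noncomm_ring
end

section
/- Let E be a C*-algebra, J ⊆ E a closed two-sided ideal, and (hₙ)ₙ a quasicentral approximate unit for J relative to E. Then for all a₁, a₂ ∈ E with a₁a₂ ∈ J, one has ‖((h_{n+1}−hₙ)^{1/2} a₁ (h_{n+1}−hₙ)^{1/2})·((1−h_{n+1})^{1/2} a₂ (1−h_{n+1})^{1/2})‖ → 0 as n → ∞, where expressions involving 1 − h_{n+1} are computed in the minimal unitization of E. (This is the asymptotic orthogonality of the maps βₙ and γₙ of the Brake–Winter decomposition on elements with orthogonal images in the quotient.) -/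
/-!
Write `s = (h_{n+1} - h_n)^{1/2}` and `t = (1 - h_{n+1})^{1/2}`, as elements of the unitization.
No commutation between `s` and `t` is needed: from
`(s a₁ s)(t a₂ t) = s a₁ s [t, a₂] t + s a₁ [s, a₂] t² + s (a₁a₂) s t²`
and `‖s‖, ‖t‖ ≤ 1`, the norm is at most `‖a₁‖ ‖[t, a₂]‖ + ‖a₁‖ ‖[s, a₂]‖ + ‖s (a₁a₂)‖`.

* The commutators vanish asymptotically because `s²` and `t²` asymptotically commute with `a₂`, and
  this passes to square roots of positive contractions by approximating the square root uniformly
  on `[0, 1]` by polynomials (`tendsto_commutator_sqrt`).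
* The last term vanishes because, for `x ∈ J`, the C*-identity gives
  `‖s x‖² ≤ ‖x‖ ‖s² x‖ = ‖x‖ ‖h_{n+1} x - h_n x‖ → 0` (`tendsto_sqrt_mul`).
-/

open Filter Topology

section AsymptoticCommutation

variable {A : Type*} [CStarAlgebra A]

lemma norm_commutator_le (y b : A) : ‖y * b - b * y‖ ≤ 2 * ‖y‖ * ‖b‖ := by
  have h1 := norm_sub_le (y * b) (b * y)
  have h2 := norm_mul_le y b
  have h3 := norm_mul_le b y
  linarith

lemma tendsto_commutator_pow {x : ℕ → A} (hx1 : ∀ n, ‖x n‖ ≤ 1) {b : A}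
    (hxb : Tendsto (fun n => x n * b - b * x n) atTop (𝓝 0)) (k : ℕ) :
    Tendsto (fun n => x n ^ k * b - b * x n ^ k) atTop (𝓝 0) := by
  induction k with
  | zero => simp
  | succ k ih =>
    rw [tendsto_zero_iff_norm_tendsto_zero] at ih hxb ⊢
    refine squeeze_zero (fun _ => norm_nonneg _) (fun n => ?_) (by simpa using ih.add hxb)
    have hid : x n ^ (k + 1) * b - b * x n ^ (k + 1)
        = (x n ^ k * b - b * x n ^ k) * x n + x n ^ k * (x n * b - b * x n) := by
      rw [pow_succ]; noncomm_ring
    have hpow : ‖x n ^ k * (x n * b - b * x n)‖ ≤ ‖x n * b - b * x n‖ := by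
      rcases Nat.eq_zero_or_pos k with rfl | hk
      · simp
      · refine (norm_mul_le _ _).trans (mul_le_of_le_one_left (norm_nonneg _) ?_)
        exact (norm_pow_le' _ hk).trans (pow_le_one₀ (norm_nonneg _) (hx1 n))
    rw [hid]
    refine (norm_add_le _ _).trans (add_le_add ?_ hpow)
    exact (norm_mul_le _ _).trans (mul_le_of_le_one_right (norm_nonneg _) (hx1 n))

lemma tendsto_commutator_aeval {x : ℕ → A} (hx1 : ∀ n, ‖x n‖ ≤ 1) {b : A}
    (hxb : Tendsto (fun n => x n * b - b * x n) atTop (𝓝 0)) (p : Polynomial ℝ) :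
    Tendsto (fun n => Polynomial.aeval (x n) p * b - b * Polynomial.aeval (x n) p)
      atTop (𝓝 0) := by
  induction p using Polynomial.induction_on' with
  | add p q hp hq =>
    refine (by simpa using hp.add hq : Tendsto _ _ (𝓝 (0 : A))).congr fun n => ?_
    simp only [map_add]; noncomm_ring
  | monomial k c =>
    have := (tendsto_commutator_pow hx1 hxb k).const_smul c
    rw [smul_zero] at this
    refine this.congr fun n => ?_
    simp only [Polynomial.aeval_monomial, ← Algebra.smul_def, smul_sub, smul_mul_assoc,
      mul_smul_comm]

variable [PartialOrder A] [StarOrderedRing A]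

lemma norm_sqrt_le_one {x : A} (hx0 : 0 ≤ x) (hx1 : ‖x‖ ≤ 1) : ‖CFC.sqrt x‖ ≤ 1 := by
  rw [CFC.norm_sqrt x hx0]
  exact Real.sqrt_le_one.mpr hx1

/-- The square roots of asymptotically central positive contractions are asymptotically central:
a polynomial approximates the square root uniformly on `[0, 1]`, which contains all the spectra. -/
lemma tendsto_commutator_sqrt {x : ℕ → A} (hx0 : ∀ n, 0 ≤ x n) (hx1 : ∀ n, ‖x n‖ ≤ 1) {b : A}
    (hxb : Tendsto (fun n => x n * b - b * x n) atTop (𝓝 0)) :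
    Tendsto (fun n => CFC.sqrt (x n) * b - b * CFC.sqrt (x n)) atTop (𝓝 0) := by
  rw [Metric.tendsto_atTop]
  intro ε hε
  set δ : ℝ := ε / (4 * (‖b‖ + 1)) with hδ
  have hb : 0 < ‖b‖ + 1 := by positivity
  have hδ0 : 0 < δ := by positivity
  obtain ⟨p, hp⟩ := exists_polynomial_near_of_continuousOn 0 1 Real.sqrt
    Real.continuous_sqrt.continuousOn δ hδ0
  obtain ⟨N, hN⟩ := Metric.tendsto_atTop.mp (tendsto_commutator_aeval hx1 hxb p) (ε / 2)
    (half_pos hε)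
  refine ⟨N, fun n hn => ?_⟩
  have hN' := hN n hn
  rw [dist_zero_right] at hN' ⊢
  have hsa : IsSelfAdjoint (x n) := .of_nonneg (hx0 n)
  have hnear : ‖CFC.sqrt (x n) - Polynomial.aeval (x n) p‖ ≤ δ := by
    rw [CFC.sqrt_eq_real_sqrt (x n) (hx0 n), cfcₙ_eq_cfc, ← cfc_polynomial p (x n) hsa,
      ← cfc_sub _ _ (x n)]
    refine norm_cfc_le hδ0.le fun y hy => ?_
    have hy0 : 0 ≤ y := spectrum_nonneg_of_nonneg (hx0 n) hy
    have hy1 : y ≤ 1 := by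
      have hy' : ‖y‖ ≤ ‖x n‖ := by
        -- In the trivial ring spectra are empty, so a point `y` of one forces `A` nontrivial.
        have : Nontrivial A := ⟨x n - algebraMap ℝ A y, 1, fun h => by
          rw [spectrum.mem_iff, IsUnit.sub_iff, h] at hy
          exact hy isUnit_one⟩
        exact spectrum.norm_le_norm_of_mem hy
      exact (le_abs_self y).trans (hy'.trans (hx1 n))
    rw [Real.norm_eq_abs, abs_sub_comm]
    exact (hp y ⟨hy0, hy1⟩).le
  have hid : CFC.sqrt (x n) * b - b * CFC.sqrt (x n)
      = ((CFC.sqrt (x n) - Polynomial.aeval (x n) p) * b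
          - b * (CFC.sqrt (x n) - Polynomial.aeval (x n) p))
        + (Polynomial.aeval (x n) p * b - b * Polynomial.aeval (x n) p) := by
    noncomm_ring
  have hsmall : 2 * ‖CFC.sqrt (x n) - Polynomial.aeval (x n) p‖ * ‖b‖ ≤ ε / 2 := by
    calc _ ≤ 2 * δ * (‖b‖ + 1) := by gcongr; linarith
      _ = ε / 2 := by rw [hδ]; field_simp; norm_num
  rw [hid]
  have h1 := norm_add_le ((CFC.sqrt (x n) - Polynomial.aeval (x n) p) * b
    - b * (CFC.sqrt (x n) - Polynomial.aeval (x n) p))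
    (Polynomial.aeval (x n) p * b - b * Polynomial.aeval (x n) p)
  have h2 := norm_commutator_le (CFC.sqrt (x n) - Polynomial.aeval (x n) p) b
  linarith

lemma tendsto_sqrt_mul {x : ℕ → A} (hx0 : ∀ n, 0 ≤ x n) {b : A}
    (hxb : Tendsto (fun n => x n * b) atTop (𝓝 0)) :
    Tendsto (fun n => CFC.sqrt (x n) * b) atTop (𝓝 0) := by
  rw [tendsto_zero_iff_norm_tendsto_zero] at hxb ⊢
  have hlim : Tendsto (fun n => √(‖b‖ * ‖x n * b‖)) atTop (𝓝 0) := by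
    simpa using (hxb.const_mul ‖b‖).sqrt
  refine squeeze_zero (fun _ => norm_nonneg _) (fun n => Real.le_sqrt_of_sq_le ?_) hlim
  have hs : star (CFC.sqrt (x n)) = CFC.sqrt (x n) :=
    (IsSelfAdjoint.of_nonneg (CFC.sqrt_nonneg (x n))).star_eq
  rw [sq, ← CStarRing.norm_star_mul_self, star_mul, hs, mul_assoc, ← mul_assoc (CFC.sqrt (x n)),
    CFC.sqrt_mul_sqrt_self (x n) (hx0 n), ← norm_star b]
  exact norm_mul_le _ _

/-- Asymptotic orthogonality for the square roots of two sequences `d`, `k` of positive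
contractions that asymptotically commute with `a₂`, where `d` asymptotically annihilates `a₁a₂`.
Nothing is assumed about `d n` commuting with `k n`. -/
lemma tendsto_norm_conj_sqrt_mul {d k : ℕ → A} (hd0 : ∀ n, 0 ≤ d n) (hd1 : ∀ n, ‖d n‖ ≤ 1)
    (hk0 : ∀ n, 0 ≤ k n) (hk1 : ∀ n, ‖k n‖ ≤ 1) {a₁ a₂ : A}
    (hd : Tendsto (fun n => d n * a₂ - a₂ * d n) atTop (𝓝 0))
    (hk : Tendsto (fun n => k n * a₂ - a₂ * k n) atTop (𝓝 0))
    (hda : Tendsto (fun n => d n * (a₁ * a₂)) atTop (𝓝 0)) :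
    Tendsto (fun n => ‖CFC.sqrt (d n) * a₁ * CFC.sqrt (d n) *
      (CFC.sqrt (k n) * a₂ * CFC.sqrt (k n))‖) atTop (𝓝 0) := by
  have hS := (tendsto_zero_iff_norm_tendsto_zero.mp
    (tendsto_commutator_sqrt hd0 hd1 hd)).const_mul ‖a₁‖
  have hT := (tendsto_zero_iff_norm_tendsto_zero.mp
    (tendsto_commutator_sqrt hk0 hk1 hk)).const_mul ‖a₁‖
  have hX := tendsto_zero_iff_norm_tendsto_zero.mp (tendsto_sqrt_mul hd0 hda)
  refine squeeze_zero (fun _ => norm_nonneg _) (fun n => ?_) (by simpa using (hT.add hS).add hX)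
  have hs := norm_sqrt_le_one (hd0 n) (hd1 n)
  have ht := norm_sqrt_le_one (hk0 n) (hk1 n)
  set s := CFC.sqrt (d n)
  set t := CFC.sqrt (k n)
  have hid : s * a₁ * s * (t * a₂ * t) = s * (a₁ * (s * ((t * a₂ - a₂ * t) * t)))
      + s * (a₁ * ((s * a₂ - a₂ * s) * t * t)) + s * (a₁ * a₂) * s * t * t := by
    noncomm_ring
  have hL : ∀ {u : A} (v : A), ‖u‖ ≤ 1 → ‖u * v‖ ≤ ‖v‖ := fun v hu =>
    (norm_mul_le _ _).trans (mul_le_of_le_one_left (norm_nonneg _) hu)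
  have hR : ∀ {u : A} (v : A), ‖u‖ ≤ 1 → ‖v * u‖ ≤ ‖v‖ := fun v hu =>
    (norm_mul_le _ _).trans (mul_le_of_le_one_right (norm_nonneg _) hu)
  rw [hid]
  refine norm_add₃_le.trans (add_le_add (add_le_add ?_ ?_) ?_)
  · refine (hL _ hs).trans ((norm_mul_le _ _).trans ?_)
    gcongr
    exact (hL _ hs).trans (hR _ ht)
  · refine (hL _ hs).trans ((norm_mul_le _ _).trans ?_)
    gcongr
    exact (hR _ ht).trans (hR _ ht)
  · exact (hR _ ht).trans ((hR _ ht).trans (hR _ hs))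

end AsymptoticCommutation

/-- Asymptotic orthogonality of the maps `βₙ` and `γₙ` of the Brake–Winter
decomposition: with `(hₙ)` a quasicentral approximate unit for `J` relative to `E`, for all
`a₁ a₂ ∈ E` with `a₁a₂ ∈ J`,
`‖((h_{n+1}−hₙ)^{1/2} a₁ (h_{n+1}−hₙ)^{1/2})·((1−h_{n+1})^{1/2} a₂ (1−h_{n+1})^{1/2})‖ → 0`,
expressions involving `1 − h_{n+1}` being computed in the minimal unitization of `E`. -/
theorem brakeWinter_beta_gamma_asymptotically_orthogonal
    {E : Type*} [NonUnitalCStarAlgebra E] [PartialOrder E] [StarOrderedRing E]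
    (J : TwoSidedIdeal E) (hJclosed : IsClosed (J : Set E))
    (h : ℕ → E)
    (h_mem : ∀ n, h n ∈ J)
    (h_pos : ∀ n, 0 ≤ h n)
    (h_contr : ∀ n, ‖h n‖ ≤ 1)
    (h_mono : ∀ n, h n ≤ h (n + 1))
    (h_approx : ∀ x, x ∈ J → Tendsto (fun n => ‖h n * x - x‖) atTop (𝓝 0))
    (h_quasi : ∀ a : E, Tendsto (fun n => ‖h n * a - a * h n‖) atTop (𝓝 0))
    (a₁ a₂ : E) (ha : a₁ * a₂ ∈ J) :
    Tendsto (fun n =>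
      ‖((CFC.sqrt (h (n + 1) - h n) * a₁ * CFC.sqrt (h (n + 1) - h n) : E) : Unitization ℂ E) *
        (CFC.sqrt ((1 : Unitization ℂ E) - (h (n + 1) : Unitization ℂ E)) *
          (a₂ : Unitization ℂ E) *
          CFC.sqrt ((1 : Unitization ℂ E) - (h (n + 1) : Unitization ℂ E)))‖) atTop (𝓝 0) := by
  have hH0 : ∀ n, (0 : Unitization ℂ E) ≤ h n := fun n => Unitization.inr_nonneg_iff.mpr (h_pos n)
  have hH1 : ∀ n, (h n : Unitization ℂ E) ≤ 1 := fun n => by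
    rw [← CStarAlgebra.norm_le_one_iff_of_nonneg _ (hH0 n), Unitization.norm_inr]
    exact h_contr n
  have hd0 : ∀ n, (0 : Unitization ℂ E) ≤ ((h (n + 1) - h n : E) : Unitization ℂ E) := fun n =>
    Unitization.inr_nonneg_iff.mpr (sub_nonneg.mpr (h_mono n))
  have hk0 : ∀ n, (0 : Unitization ℂ E) ≤ 1 - (h (n + 1) : Unitization ℂ E) := fun n =>
    sub_nonneg.mpr (hH1 (n + 1))
  have hd1 : ∀ n, ‖((h (n + 1) - h n : E) : Unitization ℂ E)‖ ≤ 1 := fun n => by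
    rw [CStarAlgebra.norm_le_one_iff_of_nonneg _ (hd0 n), Unitization.inr_sub]
    exact (sub_le_self _ (hH0 n)).trans (hH1 _)
  have hk1 : ∀ n, ‖(1 : Unitization ℂ E) - (h (n + 1) : Unitization ℂ E)‖ ≤ 1 := fun n => by
    rw [CStarAlgebra.norm_le_one_iff_of_nonneg _ (hk0 n)]
    exact sub_le_self _ (hH0 _)
  have hq : Tendsto (fun n => (h n : Unitization ℂ E) * a₂ - a₂ * h n) atTop (𝓝 0) := by
    rw [tendsto_zero_iff_norm_tendsto_zero]
    refine (h_quasi a₂).congr fun n => ?_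
    rw [← Unitization.inr_mul, ← Unitization.inr_mul, ← Unitization.inr_sub, Unitization.norm_inr]
  have hq' := hq.comp (tendsto_add_atTop_nat 1)
  have hx : Tendsto (fun n => (h n : Unitization ℂ E) * (a₁ * a₂) - a₁ * a₂) atTop (𝓝 0) := by
    rw [tendsto_zero_iff_norm_tendsto_zero]
    refine (h_approx _ ha).congr fun n => ?_
    rw [← Unitization.inr_mul, ← Unitization.inr_mul, ← Unitization.inr_sub, Unitization.norm_inr]
  have hx' := hx.comp (tendsto_add_atTop_nat 1)
  have key := tendsto_norm_conj_sqrt_mul hd0 hd1 hk0 hk1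
    (a₁ := (a₁ : Unitization ℂ E)) (a₂ := (a₂ : Unitization ℂ E)) ?_ ?_ ?_
  · refine key.congr fun n => ?_
    rw [Unitization.inr_mul, Unitization.inr_mul, Unitization.sqrt_inr]
  · refine (by simpa using hq'.sub hq : Tendsto _ _ (𝓝 (0 : Unitization ℂ E))).congr fun n => ?_
    simp only [Unitization.inr_sub]; noncomm_ring
  · refine (by simpa using hq'.neg : Tendsto _ _ (𝓝 (0 : Unitization ℂ E))).congr fun n => ?_
    noncomm_ring
  · refine (by simpa using hx'.sub hx : Tendsto _ _ (𝓝 (0 : Unitization ℂ E))).congr fun n => ?_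
    simp only [Unitization.inr_sub]; noncomm_ring
end

section
/- Let E be a C*-algebra, J ⊆ E a closed two-sided ideal, and π : E → E/J the quotient map. Suppose h ∈ E is positive with h ∈ J and closure{h x h : x ∈ J} = J, and e ∈ E is positive with closure{π(e) y π(e) : y ∈ E/J} = E/J. Then closure{(h+e) x (h+e) : x ∈ E} = E. (That is, if h is strictly positive in J and π(e) is strictly positive in E/J, then h + e is strictly positive in E.) -/
/-!
Write `k = h + e`. The heart of the matter is that the closed right ideal `closure (k E)` is all of
`E`; approximating first on the left and then, after taking adjoints, on the right gives
`closure (k E k) = E`.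

* `exists_norm_sub_mul_sq_le` and `sqrt_mem_closure_mul`: if `0 ≤ h ≤ k`, then `√h`, and hence `h`,
  lies in `closure (k E)`. With `w = (k + ε)⁻¹` in the unitization, `u = 1 - k w = ε (k + ε)⁻¹`
  satisfies `‖u √h‖² = ‖u h u‖ ≤ ‖u k u‖ ≤ ε`.
* Therefore `J = closure (h J h)` is contained in `closure (k E)`.
* Modulo `J` the elements `k` and `e` agree, so for each `x` some `π (x - k a)` is small. By the
  open mapping theorem it lifts to a small element `d`, and `x - k a - d ∈ J ⊆ closure (k E)`.
-/

open scoped NNReal CStarAlgebra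

/-- If `s * s ≤ k` with `s` self-adjoint, then the resolvent `w = (ε + k)⁻¹` approximately
inverts `k` on `s`. -/
lemma exists_norm_sub_mul_sq_le {A : Type*} [CStarAlgebra A] [PartialOrder A] [StarOrderedRing A]
    {s k : A} (hs : IsSelfAdjoint s) (hk : 0 ≤ k) (hsk : s * s ≤ k) {ε : ℝ≥0} (hε : 0 < ε) :
    ∃ w : A, ‖s - k * (w * s)‖₊ ^ 2 ≤ ε := by
  have hc : Continuous fun t : ℝ≥0 ↦ (ε + t)⁻¹ :=
    Continuous.inv₀ (by fun_prop) fun t ↦ by positivity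
  have hcu : Continuous fun t : ℝ≥0 ↦ ε * (ε + t)⁻¹ := continuous_const.mul hc
  set w : A := cfc (fun t : ℝ≥0 ↦ (ε + t)⁻¹) k
  set u : A := cfc (fun t : ℝ≥0 ↦ ε * (ε + t)⁻¹) k with hu_def
  have hu : IsSelfAdjoint u := .of_nonneg cfc_nonneg_of_predicate
  have hkw : k * w + u = 1 := by
    have h1 : k * w = cfc (fun t : ℝ≥0 ↦ t * (ε + t)⁻¹) k := by
      rw [cfc_mul (fun t : ℝ≥0 ↦ t) _ k continuousOn_id hc.continuousOn, cfc_id' ℝ≥0 k]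
    rw [h1, hu_def,
      ← cfc_add k _ _ (continuous_id'.fun_mul hc).continuousOn hcu.continuousOn, ← cfc_one (R := ℝ≥0) k]
    refine cfc_congr fun t _ ↦ ?_
    have : ε + t ≠ 0 := by positivity
    simp only [Pi.one_apply]
    rw [← add_mul, add_comm t, mul_inv_cancel₀ this]
  have huku : ‖u * k * u‖₊ ≤ ε := by
    have h1 : u * k * u = cfc (fun t : ℝ≥0 ↦ ε * (ε + t)⁻¹ * t * (ε * (ε + t)⁻¹)) k := by
      rw [cfc_mul _ _ k (hcu.fun_mul continuous_id').continuousOn hcu.continuousOn,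
        cfc_mul _ (fun t ↦ t) k hcu.continuousOn continuousOn_id, cfc_id' ℝ≥0 k]
    rw [h1]
    refine nnnorm_cfc_nnreal_le fun t _ ↦ ?_
    have hle1 : (ε + t)⁻¹ * t ≤ 1 := by
      rw [mul_comm, ← div_eq_mul_inv]
      exact div_le_one (by positivity) |>.mpr le_add_self
    have hle2 : ε * (ε + t)⁻¹ ≤ 1 := by
      rw [← div_eq_mul_inv]
      exact div_le_one (by positivity) |>.mpr le_self_add
    calc ε * (ε + t)⁻¹ * t * (ε * (ε + t)⁻¹) = ε * ((ε + t)⁻¹ * t) * (ε * (ε + t)⁻¹) := by ring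
      _ ≤ ε * 1 * 1 := by gcongr
      _ = ε := by simp
  refine ⟨w, ?_⟩
  have hsub : s - k * (w * s) = u * s := by
    rw [← mul_assoc, eq_sub_of_add_eq' hkw, sub_mul, one_mul]
  have hnorm : ‖u * s‖₊ ^ 2 = ‖u * (s * s) * u‖₊ := by
    rw [sq, ← CStarRing.nnnorm_self_mul_star, star_mul, hs.star_eq, hu.star_eq]
    simp only [mul_assoc]
  rw [hsub, hnorm]
  refine (CStarAlgebra.nnnorm_le_nnnorm_of_nonneg_of_le ?_ (hu.conjugate_le_conjugate hsk)).trans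
    huku
  exact hu.conjugate_nonneg hs.mul_self_nonneg

section ClosedRightIdeal

variable {E : Type*} [NonUnitalCStarAlgebra E]

/-- The closed right ideal `closure (k E)`. -/
def closedRightIdeal (k : E) : AddSubgroup E :=
  (AddMonoidHom.mulLeft k).range.topologicalClosure

lemma mem_closedRightIdeal {k x : E} :
    x ∈ closedRightIdeal k ↔ ∀ ε > 0, ∃ y, ‖x - k * y‖ < ε := by
  rw [closedRightIdeal, ← SetLike.mem_coe, AddSubgroup.topologicalClosure_coe,
    Metric.mem_closure_iff]
  simp [dist_eq_norm]

lemma mul_mem_closedRightIdeal {k x : E} (hx : x ∈ closedRightIdeal k) (y : E) :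
    x * y ∈ closedRightIdeal k := by
  refine map_mem_closure (f := (· * y)) (by fun_prop) hx ?_
  rintro _ ⟨z, rfl⟩
  exact ⟨z * y, by simp [mul_assoc]⟩

/-- An adjoint argument turns right density of `k E` into density of the hereditary
subalgebra `k E k`. -/
lemma closure_conj_eq_univ {k : E} (hk : IsSelfAdjoint k)
    (h : ∀ x, x ∈ closedRightIdeal k) : closure {y : E | ∃ x : E, y = k * x * k} = Set.univ := by
  -- right multiples of `k` are limits of elements `k * x * k`, since `star y` is a limit of `k * x`
  have key (y : E) : k * y ∈ closure {y : E | ∃ x : E, y = k * x * k} := by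
    have := map_mem_closure (f := fun z ↦ k * star z) (by fun_prop) (h (star y))
      (t := {y : E | ∃ x : E, y = k * x * k}) (by
        rintro _ ⟨z, rfl⟩
        exact ⟨star z, by simp [hk.star_eq, mul_assoc]⟩)
    simpa using this
  refine Set.eq_univ_of_forall fun x ↦ closure_minimal ?_ isClosed_closure (h x)
  rintro _ ⟨z, rfl⟩
  exact key z

variable [PartialOrder E] [StarOrderedRing E]

lemma sqrt_mem_closure_mul {h k : E} (hh : 0 ≤ h) (hhk : h ≤ k) :
    CFC.sqrt h ∈ closedRightIdeal k := by
  rw [mem_closedRightIdeal]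
  intro ε hε
  have hs : IsSelfAdjoint (CFC.sqrt h) := .of_nonneg (CFC.sqrt_nonneg h)
  have hk : 0 ≤ k := hh.trans hhk
  lift ε to ℝ≥0 using hε.le
  rw [gt_iff_lt, NNReal.coe_pos] at hε
  obtain ⟨w, hw⟩ := exists_norm_sub_mul_sq_le (A := Unitization ℂ E) (s := (CFC.sqrt h : E))
    (k := k) (hs.inr ℂ) (Unitization.inr_nonneg_iff.mpr hk)
    (by
      rw [← Unitization.inr_mul, CFC.sqrt_mul_sqrt_self h,
        Unitization.inr_le_iff h k (.of_nonneg hh) (.of_nonneg hk)]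
      exact hhk) (ε := (ε / 2) ^ 2) (by positivity)
  -- `E` is an ideal in its unitization, so `w * √h` comes from an element of `E`
  obtain ⟨y, hy⟩ : ∃ y : E, (y : Unitization ℂ E) = w * (CFC.sqrt h : E) := by
    refine ⟨(w * (CFC.sqrt h : E)).snd, ?_⟩
    ext <;> simp
  refine ⟨y, ?_⟩
  rw [← hy, ← Unitization.inr_mul, ← Unitization.inr_sub, Unitization.nnnorm_inr,
    pow_le_pow_iff_left₀ (by positivity) (by positivity) two_ne_zero] at hw
  rw [← coe_nnnorm, NNReal.coe_lt_coe]
  exact hw.trans_lt (NNReal.half_lt_self hε.ne')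

end ClosedRightIdeal

theorem strictly_positive_of_ideal_and_quotient
    {E Q : Type*} [NonUnitalCStarAlgebra E] [PartialOrder E] [StarOrderedRing E]
    [NonUnitalCStarAlgebra Q] [PartialOrder Q] [StarOrderedRing Q]
    (J : TwoSidedIdeal E) (hJclosed : IsClosed (J : Set E))
    (π : E →⋆ₙₐ[ℂ] Q) (hπsurj : Function.Surjective π)
    (hπker : ∀ x : E, π x = 0 ↔ x ∈ J)
    (h : E) (h_pos : 0 ≤ h) (h_mem : h ∈ J)
    (h_strict : closure {y : E | ∃ x ∈ J, y = h * x * h} = (J : Set E))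
    (e : E) (e_pos : 0 ≤ e)
    (e_strict : closure {z : Q | ∃ y : Q, z = π e * y * π e} = Set.univ) :
    closure {y : E | ∃ x : E, y = (h + e) * x * (h + e)} = Set.univ := by
  have hk : 0 ≤ h + e := add_nonneg h_pos e_pos
  have hh : h ∈ closedRightIdeal (h + e) := by
    have := mul_mem_closedRightIdeal
      (sqrt_mem_closure_mul h_pos (le_add_of_nonneg_right e_pos)) (CFC.sqrt h)
    rwa [CFC.sqrt_mul_sqrt_self h] at this
  have hJ (j : E) (hj : j ∈ J) : j ∈ closedRightIdeal (h + e) := by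
    have hj' : j ∈ closure {y : E | ∃ x ∈ J, y = h * x * h} := h_strict ▸ hj
    refine closure_minimal ?_ (AddSubgroup.isClosed_topologicalClosure _) hj'
    rintro _ ⟨x, -, rfl⟩
    exact mul_mem_closedRightIdeal (mul_mem_closedRightIdeal hh x) h
  refine closure_conj_eq_univ (.of_nonneg hk) fun x ↦ ?_
  let πL : E →L[ℂ] Q :=
    ⟨(π : E →ₗ[ℂ] Q), AddMonoidHomClass.continuous_of_bound π 1 fun a ↦ by
      simpa using NonUnitalStarAlgHom.norm_apply_le π a⟩
  obtain ⟨C, hC, hlift⟩ := πL.exists_preimage_norm_le hπsurj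
  rw [mem_closedRightIdeal]
  intro ε hε
  have hx : π x ∈ closure {z : Q | ∃ y : Q, z = π e * y * π e} := e_strict ▸ Set.mem_univ _
  obtain ⟨_, ⟨y, rfl⟩, hy⟩ := Metric.mem_closure_iff.mp hx (ε / 2 / C) (by positivity)
  obtain ⟨b, rfl⟩ := hπsurj y
  rw [dist_eq_norm] at hy
  have hπh : π h = 0 := (hπker h).mpr h_mem
  obtain ⟨d, hd, hdn⟩ := hlift (π x - π e * π b * π e)
  -- `d` is a small lift of the error, so the remaining part of `x` lies in `J`
  have hmem : x - (h + e) * (b * e) - d ∈ J := by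
    rw [← hπker]
    have hd' : π d = π x - π e * π b * π e := hd
    simp [hd', hπh, mul_assoc]
  obtain ⟨a, ha⟩ := mem_closedRightIdeal.mp (hJ _ hmem) (ε / 2) (by positivity)
  refine ⟨b * e + a, ?_⟩
  have hd2 : ‖d‖ < ε / 2 := by
    refine hdn.trans_lt ?_
    rwa [lt_div_iff₀' hC] at hy
  calc ‖x - (h + e) * (b * e + a)‖
      = ‖(x - (h + e) * (b * e) - d - (h + e) * a) + d‖ := by
        congr 1
        rw [mul_add]
        abel
    _ ≤ _ := norm_add_le _ _
    _ < ε := by linarith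
end

section
/- Let E be a C*-algebra, J ⊆ E a closed two-sided ideal with quotient map π : E → E/J, and let f ∈ E be positive. Set F = J + closure{f x f : x ∈ E}. Then F is a closed *-subalgebra of E containing J as a closed two-sided ideal, and π(F) = closure{π(f) y π(f) : y ∈ E/J}; hence F/J is isomorphic to the hereditary subalgebra of E/J generated by π(f). Moreover, if J is essential in E (i.e. x ∈ E and xJ = {0} imply x = 0), then J is essential in F. -/
/-!
Everything reduces to `F = π ⁻¹' B` with `B = closure (π f * Q * π f)`, because `B` is a closed
*-subalgebra of `Q` and `π` is a continuous *-homomorphism with kernel `J`.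

Put `A = closure (f * E * f)`, a closed *-subalgebra of `E` since `f` is self-adjoint. Then
`J + A = π ⁻¹' (π '' A)`, so what is needed is `π '' A = B`. The inclusion `⊆` is continuity. The
inclusion `⊇` holds because `π '' A` contains `π f * Q * π f` and is closed, being the range of the
*-homomorphism `π` restricted to the C⋆-algebra `A`.

That the range of a *-homomorphism of C⋆-algebras is closed (`isClosed_range_starHom`) follows from
lifting with norm control: if `φ a = b` with `a` self-adjoint, truncating `a` at height `‖b‖` by
functional calculus gives a lift of `b` of norm at most `‖b‖`. Real and imaginary parts then give
lifts of arbitrary elements of the range with norm at most twice as large, and completeness of the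
domain propagates such lifts to the closure of the range.
-/

open Pointwise

section Range

variable {A B : Type*} [NonUnitalCStarAlgebra A] [NonUnitalCStarAlgebra B]

lemma continuous_starHom (φ : A →⋆ₙₐ[ℂ] B) : Continuous φ :=
  AddMonoidHomClass.continuous_of_bound φ 1
    (by simpa only [one_mul] using NonUnitalStarAlgHom.norm_apply_le φ)

/-- The lift is the truncation of `a` to the interval `[-‖φ a‖, ‖φ a‖]`. -/
lemma exists_lift_of_isSelfAdjoint (φ : A →⋆ₙₐ[ℂ] B) (a : A) (ha : IsSelfAdjoint a) :
    ∃ a' : A, φ a' = φ a ∧ ‖a'‖ ≤ ‖φ a‖ := by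
  have hb : IsSelfAdjoint (φ a) := ha.map φ
  set c := ‖φ a‖ with hc
  have hc0 : 0 ≤ c := norm_nonneg _
  refine ⟨cfcₙ (fun t : ℝ => max (-c) (min t c)) a, ?_, ?_⟩
  · rw [NonUnitalStarAlgHom.map_cfcₙ (R := ℝ) φ _ a (by fun_prop) (by simp [hc0])
      (continuous_starHom φ) ha hb]
    conv_rhs => rw [← cfcₙ_id' ℝ (φ a)]
    refine cfcₙ_congr fun x hx => ?_
    have h1 : ‖x‖ ≤ c :=
      NonUnitalIsometricContinuousFunctionalCalculus.norm_quasispectrum_le (φ a) hx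
    rw [Real.norm_eq_abs, abs_le] at h1
    simp [h1.1, h1.2]
  · refine norm_cfcₙ_le fun x _ => ?_
    rw [Real.norm_eq_abs, abs_le]
    exact ⟨le_max_left _ _, max_le (by linarith) (min_le_right _ _)⟩

lemma exists_lift_norm_le (φ : A →⋆ₙₐ[ℂ] B) (a : A) :
    ∃ a' : A, φ a' = φ a ∧ ‖a'‖ ≤ 2 * ‖φ a‖ := by
  obtain ⟨x, hx, hxn⟩ := exists_lift_of_isSelfAdjoint φ _ (realPart a).2
  obtain ⟨y, hy, hyn⟩ := exists_lift_of_isSelfAdjoint φ _ (imaginaryPart a).2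
  have hre : φ (realPart a : A) = (realPart (φ a) : B) := by
    simp only [realPart_apply_coe, ← Complex.coe_smul, map_smul, map_add, map_star]
  have him : φ (imaginaryPart a : A) = (imaginaryPart (φ a) : B) := by
    simp only [imaginaryPart_apply_coe, ← Complex.coe_smul, map_smul, map_sub, map_star]
  have hr : ‖(realPart (φ a) : B)‖ ≤ ‖φ a‖ := by
    simpa using realPart.norm_le (φ a)
  have hi : ‖(imaginaryPart (φ a) : B)‖ ≤ ‖φ a‖ := by
    simpa using imaginaryPart.norm_le (φ a)
  refine ⟨x + Complex.I • y, ?_, ?_⟩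
  · rw [map_add, map_smul, hx, hy, hre, him, realPart_add_I_smul_imaginaryPart]
  · rw [hre] at hxn
    rw [him] at hyn
    calc ‖x + Complex.I • y‖ ≤ ‖x‖ + ‖Complex.I • y‖ := norm_add_le _ _
      _ = ‖x‖ + ‖y‖ := by rw [norm_smul, Complex.norm_I, one_mul]
      _ ≤ 2 * ‖φ a‖ := by linarith

/-- The range of a *-homomorphism between C⋆-algebras is closed. -/
lemma isClosed_range_starHom (φ : A →⋆ₙₐ[ℂ] B) : IsClosed (Set.range φ) := by
  let g : NormedAddGroupHom A B :=
    (AddMonoidHomClass.toAddMonoidHom φ).mkNormedAddGroupHom 1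
      (fun a => by rw [one_mul]; exact NonUnitalStarAlgHom.norm_apply_le φ a)
  let K : AddSubgroup B := (AddMonoidHomClass.toAddMonoidHom φ).range
  have hK : g.SurjectiveOnWith K 2 := by
    rintro _ ⟨a, rfl⟩
    exact exists_lift_norm_le φ a
  have h := controlled_closure_of_complete two_pos one_pos hK
  refine isClosed_of_closure_subset fun b hb => ?_
  obtain ⟨a, ha, -⟩ := h b hb
  exact ⟨a, ha⟩

end Range

/-- The corner `{g x g : x ∈ A}` of a self-adjoint element `g`, as a *-subalgebra. -/
def cornerSubalgebra {A : Type*} [NonUnitalCStarAlgebra A] (g : A) (hg : star g = g) :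
    NonUnitalStarSubalgebra ℂ A where
  carrier := {y : A | ∃ x : A, y = g * x * g}
  zero_mem' := ⟨0, by simp⟩
  add_mem' := by
    rintro _ _ ⟨x, rfl⟩ ⟨y, rfl⟩
    exact ⟨x + y, by simp [mul_add, add_mul]⟩
  mul_mem' := by
    rintro _ _ ⟨x, rfl⟩ ⟨y, rfl⟩
    exact ⟨x * g * g * y, by simp [mul_assoc]⟩
  smul_mem' := by
    rintro c _ ⟨x, rfl⟩
    exact ⟨c • x, by rw [mul_smul_comm, smul_mul_assoc]⟩
  star_mem' := by
    rintro _ ⟨x, rfl⟩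
    exact ⟨star x, by simp [hg, mul_assoc]⟩

/-- A *-homomorphism maps `closure (f * E * f)` onto `closure (π f * Q * π f)`. -/
lemma image_closure_corner {E Q : Type*} [NonUnitalCStarAlgebra E] [NonUnitalCStarAlgebra Q]
    (π : E →⋆ₙₐ[ℂ] Q) (hπ : Function.Surjective π) (f : E) (hf : star f = f) :
    π '' closure {y : E | ∃ x : E, y = f * x * f} =
      closure {z : Q | ∃ y : Q, z = π f * y * π f} := by
  apply subset_antisymm
  · refine (image_closure_subset_closure_image (continuous_starHom π)).trans (closure_mono ?_)
    rintro _ ⟨_, ⟨x, rfl⟩, rfl⟩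
    exact ⟨π x, by simp⟩
  · let S := (cornerSubalgebra f hf).topologicalClosure
    have : IsClosed (S : Set E) := NonUnitalStarSubalgebra.isClosed_topologicalClosure _
    have h := isClosed_range_starHom (π.comp (NonUnitalStarSubalgebraClass.subtype S))
    have hr : Set.range (π.comp (NonUnitalStarSubalgebraClass.subtype S)) =
        π '' closure {y : E | ∃ x : E, y = f * x * f} := by
      ext z
      constructor
      · rintro ⟨s, rfl⟩
        exact ⟨s, s.2, rfl⟩
      · rintro ⟨s, hs, rfl⟩
        exact ⟨⟨s, hs⟩, rfl⟩
    rw [hr] at h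
    refine closure_minimal ?_ h
    rintro _ ⟨y, rfl⟩
    obtain ⟨x, rfl⟩ := hπ y
    exact ⟨f * x * f, subset_closure ⟨x, rfl⟩, by simp⟩

/-- Let `J` be a closed two-sided ideal of the C*-algebra `E`, with quotient map
`π : E → Q` (encoded as a surjective *-homomorphism with kernel `J`), and let `f ∈ E` be positive.
Set `F = J + closure(fEf)`. Then `F` is a closed *-subalgebra of `E` containing `J` as a closed
two-sided ideal, and `π(F) = closure(π(f)·(E/J)·π(f))`. Moreover, if `J` is essential in `E`,
then `J` is essential in `F`. -/
theorem ideal_plus_hereditary_subalgebra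
    {E Q : Type*} [NonUnitalCStarAlgebra E] [PartialOrder E] [StarOrderedRing E]
    [NonUnitalCStarAlgebra Q] [PartialOrder Q] [StarOrderedRing Q]
    (J : TwoSidedIdeal E) (hJclosed : IsClosed (J : Set E))
    (π : E →⋆ₙₐ[ℂ] Q) (hπsurj : Function.Surjective π)
    (hπker : ∀ x : E, π x = 0 ↔ x ∈ J)
    (f : E) (hf : 0 ≤ f)
    (F : Set E) (hF : F = (J : Set E) + closure {y : E | ∃ x : E, y = f * x * f}) :
    IsClosed F ∧
    (∀ x ∈ F, ∀ y ∈ F, x + y ∈ F ∧ x * y ∈ F) ∧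
    (∀ (c : ℂ), ∀ x ∈ F, c • x ∈ F) ∧
    (∀ x ∈ F, star x ∈ F) ∧
    (J : Set E) ⊆ F ∧
    (∀ x ∈ F, ∀ j ∈ J, x * j ∈ J ∧ j * x ∈ J) ∧
    (⇑π '' F = closure {z : Q | ∃ y : Q, z = π f * y * π f}) ∧
    ((∀ x : E, (∀ j ∈ J, x * j = 0) → x = 0) →
      ∀ x ∈ F, (∀ j ∈ J, x * j = 0) → x = 0) := by
  have hfs : star f = f := IsSelfAdjoint.of_nonneg hf
  have hgs : star (π f) = π f := by rw [← map_star, hfs]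
  let B := (cornerSubalgebra (π f) hgs).topologicalClosure
  have hB : (B : Set Q) = closure {z : Q | ∃ y : Q, z = π f * y * π f} := rfl
  have himg := image_closure_corner π hπsurj f hfs
  have hmem : ∀ x, x ∈ F ↔ π x ∈ B := by
    intro x
    rw [← SetLike.mem_coe, hB, ← himg, hF, Set.mem_add]
    constructor
    · rintro ⟨j, hj, a, ha, rfl⟩
      exact ⟨a, ha, by rw [map_add, (hπker j).2 hj, zero_add]⟩
    · rintro ⟨a, ha, hax⟩
      exact ⟨x - a, (hπker _).1 (by rw [map_sub, hax, sub_self]), a, ha, sub_add_cancel x a⟩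
  refine ⟨?_, ?_, ?_, ?_, ?_, ?_, ?_, fun h x _ => h x⟩
  · have : F = π ⁻¹' (B : Set Q) := Set.ext hmem
    rw [this, hB]
    exact isClosed_closure.preimage (continuous_starHom π)
  · intro x hx y hy
    rw [hmem] at hx hy
    rw [hmem, hmem, map_add, map_mul]
    exact ⟨add_mem hx hy, mul_mem hx hy⟩
  · intro c x hx
    rw [hmem] at hx ⊢
    rw [map_smul]
    exact SMulMemClass.smul_mem c hx
  · intro x hx
    rw [hmem] at hx ⊢
    rw [map_star]
    exact star_mem hx
  · intro x hx
    rw [hmem, (hπker x).2 hx]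
    exact zero_mem B
  · intro x _ j hj
    exact ⟨J.mul_mem_left x j hj, J.mul_mem_right j x hj⟩
  · rw [← hB]
    have : F = π ⁻¹' (B : Set Q) := Set.ext hmem
    rw [this, Set.image_preimage_eq _ hπsurj]
end

section
/- Let E be a C*-algebra, J ⊆ E a closed two-sided ideal, h ∈ J positive with closure{h x h : x ∈ J} = J, and f ∈ E positive. Then J + closure{f x f : x ∈ E} = closure{(h+f) x (h+f) : x ∈ E}. In particular, J + closure(fEf) is a hereditary subalgebra of E. -/
/-!
For `0 ≤ g`, let `u ε = q(g)` with `q(t) = t² / (t² + ε²)`. These are self-adjoint contractions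
lying in `g E ∩ E g`, and `‖g - g (u ε)‖ ≤ ε`, so they form an approximate unit for
`closure (gEg)`. Consequently `x ∈ closure (gEg)` as soon as `u x u → x`, which yields heredity:
if `0 ≤ x ≤ y` with `y ∈ closure (gEg)`, write `x = star s * s`; then
`‖s - s u‖² = ‖x - x u - u x + u x u‖ ≤ ‖y - y u - u y + u y u‖ → 0`.

With `g = h + f`, heredity gives `h, f ∈ closure (gEg)`, hence
`J + closure (fEf) ⊆ closure (gEg)`. For the reverse inclusion, `gEg ⊆ J + fEf` because `h ∈ J`,
so it suffices that `J + B` is closed, where `B = closure (fEf)`. If `y = j + b` with `j ∈ J`,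
`b ∈ B` and `u` is an approximate unit element for `f`, then `u j u ∈ J ∩ B` and
`y = (j - u j u) + (b + u j u)` with `b + u j u = (b - u b u) + u y u` of norm at most `2 ‖y‖` for
a suitable `u`. So addition `J × B → J + B` admits norm-controlled preimages, and completeness of
`J × B` forces its range to be closed.
-/

open Pointwise

open Filter Topology

namespace HereditaryCorner

variable {E : Type*} [NonUnitalCStarAlgebra E]

/-- The closure of `gEg`, as an additive subgroup. -/
def corner (g : E) : AddSubgroup E :=
  (((AddMonoidHom.mulRight g).comp (AddMonoidHom.mulLeft g)).range).topologicalClosure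

lemma coe_corner (g : E) :
    (corner g : Set E) = closure {y : E | ∃ x : E, y = g * x * g} := by
  rw [corner, AddSubgroup.topologicalClosure_coe]
  congr 1
  ext y
  simp [eq_comm]

lemma isClosed_corner (g : E) : IsClosed (corner g : Set E) := by
  rw [coe_corner]; exact isClosed_closure

lemma conj_mem_corner (g x : E) : g * x * g ∈ corner g := by
  rw [← SetLike.mem_coe, coe_corner]
  exact subset_closure ⟨x, rfl⟩

/-- A sequence of self-adjoint contractions `u n ∈ gE ∩ Eg`, with common cofactor `v n`, which acts
as a right unit on `g` in the limit. -/
structure IsLocalUnit (g : E) (u v : ℕ → E) : Prop where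
  eq_mul_left : ∀ n, u n = g * v n
  eq_mul_right : ∀ n, u n = v n * g
  star_eq : ∀ n, star (u n) = u n
  norm_le : ∀ n, ‖u n‖ ≤ 1
  tendsto : Tendsto (fun n ↦ g * u n) atTop (𝓝 g)

lemma exists_isLocalUnit [PartialOrder E] [StarOrderedRing E] {g : E} (hg : 0 ≤ g) :
    ∃ u v : ℕ → E, IsLocalUnit g u v := by
  have hsa : IsSelfAdjoint g := .of_nonneg hg
  let ε : ℕ → ℝ := fun n ↦ 1 / ((n : ℝ) + 1)
  have hε : ∀ n, 0 < ε n := fun n ↦ by positivity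
  have hpos : ∀ n (t : ℝ), 0 < t ^ 2 + ε n ^ 2 := fun n t ↦ by have := hε n; positivity
  let p : ℕ → ℝ → ℝ := fun n t ↦ t / (t ^ 2 + ε n ^ 2)
  have hp : ∀ n, Continuous (p n) := fun n ↦
    continuous_id.div (by fun_prop) fun t ↦ (hpos n t).ne'
  have hp0 : ∀ n, p n 0 = 0 := fun n ↦ by simp [p]
  have hid : cfcₙ (fun t : ℝ ↦ t) g = g := cfcₙ_id' ℝ g
  have hq : ∀ n, Continuous fun t ↦ t * p n t := fun n ↦ continuous_id.mul (hp n)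
  have hl : ∀ n, cfcₙ (fun t ↦ t * p n t) g = g * cfcₙ (p n) g := fun n ↦ by
    rw [cfcₙ_mul (fun t ↦ t) (p n) g (by fun_prop) rfl (hp n).continuousOn (hp0 n), hid]
  have hr : ∀ n, cfcₙ (fun t ↦ t * p n t) g = cfcₙ (p n) g * g := fun n ↦ by
    simp_rw [mul_comm _ (p n _)]
    rw [cfcₙ_mul (p n) (fun t ↦ t) g (hp n).continuousOn (hp0 n) (by fun_prop) rfl, hid]
  refine ⟨fun n ↦ cfcₙ (fun t ↦ t * p n t) g, fun n ↦ cfcₙ (p n) g, hl, hr, fun n ↦ ?_,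
    fun n ↦ ?_, ?_⟩
  · exact (cfcₙ_predicate (fun t ↦ t * p n t) g : IsSelfAdjoint _).star_eq
  · refine norm_cfcₙ_le fun t _ ↦ ?_
    have h1 : t * p n t = t ^ 2 / (t ^ 2 + ε n ^ 2) := by simp only [p]; ring
    rw [h1, Real.norm_of_nonneg (div_nonneg (sq_nonneg t) (hpos n t).le), div_le_one (hpos n t)]
    nlinarith [sq_nonneg (ε n)]
  · rw [tendsto_iff_norm_sub_tendsto_zero]
    refine squeeze_zero (fun n ↦ norm_nonneg _) (fun n ↦ ?_)
      (tendsto_one_div_add_atTop_nhds_zero_nat (𝕜 := ℝ))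
    rw [norm_sub_rev]
    have h2 : g - g * cfcₙ (fun t ↦ t * p n t) g = cfcₙ (fun t ↦ t - t * (t * p n t)) g := by
      rw [cfcₙ_sub (fun t ↦ t) (fun t ↦ t * (t * p n t)) g (by fun_prop) rfl
        (continuous_id.mul (hq n)).continuousOn (by simp),
        cfcₙ_mul (fun t ↦ t) (fun t ↦ t * p n t) g (by fun_prop) rfl (hq n).continuousOn (by simp),
        hid]
    rw [h2]
    refine norm_cfcₙ_le fun t _ ↦ ?_
    have h3 : t - t * (t * p n t) = ε n * (ε n * t / (t ^ 2 + ε n ^ 2)) := by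
      simp only [p]
      field_simp [(hpos n t).ne']
      ring
    have h4 : |ε n * t / (t ^ 2 + ε n ^ 2)| ≤ 1 := by
      rw [abs_div, abs_of_pos (hpos n t), div_le_one (hpos n t), abs_le]
      constructor <;> nlinarith [sq_nonneg (t + ε n), sq_nonneg (t - ε n)]
    rw [h3, norm_mul, Real.norm_of_nonneg (hε n).le, Real.norm_eq_abs]
    exact mul_le_of_le_one_right (hε n).le h4

lemma star_mem_corner {g y : E} (hg : IsSelfAdjoint g) (hy : y ∈ corner g) :
    star y ∈ corner g := by
  rw [← SetLike.mem_coe, coe_corner] at hy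
  refine closure_minimal (t := star ⁻¹' (corner g : Set E)) ?_
    ((isClosed_corner g).preimage continuous_star) hy
  rintro _ ⟨x, rfl⟩
  have : star (g * x * g) = g * star x * g := by simp [hg.star_eq, mul_assoc]
  rw [Set.mem_preimage, this]
  exact conj_mem_corner g _

namespace IsLocalUnit

variable {g : E} {u v : ℕ → E}

lemma tendsto_mul (hu : IsLocalUnit g u v) {y : E} (hy : y ∈ corner g) :
    Tendsto (fun n ↦ y * u n) atTop (𝓝 y) := by
  rw [← SetLike.mem_coe, coe_corner] at hy
  rw [Metric.tendsto_atTop]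
  intro ε hε
  obtain ⟨_, ⟨x, rfl⟩, hx⟩ := Metric.mem_closure_iff.1 hy (ε / 3) (by positivity)
  have ht : Tendsto (fun n ↦ g * x * g * u n) atTop (𝓝 (g * x * g)) := by
    simpa only [mul_assoc] using hu.tendsto.const_mul (g * x)
  obtain ⟨N, hN⟩ := Metric.tendsto_atTop.1 ht (ε / 3) (by positivity)
  refine ⟨N, fun n hn ↦ ?_⟩
  have h1 := hN n hn
  have h2 : ‖(y - g * x * g) * u n‖ ≤ ‖y - g * x * g‖ :=
    (norm_mul_le _ _).trans (mul_le_of_le_one_right (norm_nonneg _) (hu.norm_le n))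
  rw [dist_eq_norm] at *
  calc ‖y * u n - y‖
      = ‖(y - g * x * g) * u n + (g * x * g * u n - g * x * g) - (y - g * x * g)‖ := by
        congr 1; noncomm_ring
    _ ≤ ‖(y - g * x * g) * u n‖ + ‖g * x * g * u n - g * x * g‖ + ‖y - g * x * g‖ :=
        (norm_sub_le _ _).trans (by gcongr; exact norm_add_le _ _)
    _ < ε := by linarith

lemma tendsto_mul_left (hu : IsLocalUnit g u v) (hg : IsSelfAdjoint g) {y : E}
    (hy : y ∈ corner g) : Tendsto (fun n ↦ u n * y) atTop (𝓝 y) := by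
  simpa [hu.star_eq] using (hu.tendsto_mul (star_mem_corner hg hy)).star

lemma conj_mem (hu : IsLocalUnit g u v) (n : ℕ) (x : E) : u n * x * u n ∈ corner g := by
  have : u n * x * u n = g * (v n * x * v n) * g := by
    nth_rewrite 1 [hu.eq_mul_left n]
    rw [hu.eq_mul_right n]
    simp only [mul_assoc]
  rw [this]
  exact conj_mem_corner g _

lemma mem_of_tendsto (hu : IsLocalUnit g u v) {x : E}
    (hx : Tendsto (fun n ↦ u n * x * u n) atTop (𝓝 x)) : x ∈ corner g :=
  (isClosed_corner g).mem_of_tendsto hx (.of_forall fun n ↦ hu.conj_mem n x)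

lemma mul_mul_mem (hu : IsLocalUnit g u v) (hg : IsSelfAdjoint g) {y z : E}
    (hy : y ∈ corner g) (hz : z ∈ corner g) (x : E) : y * x * z ∈ corner g := by
  apply hu.mem_of_tendsto
  simpa only [mul_assoc] using
    ((hu.tendsto_mul_left hg hy).mul_const x).mul (hu.tendsto_mul hz)

lemma tendsto_conj (hu : IsLocalUnit g u v) (hg : IsSelfAdjoint g) {y : E}
    (hy : y ∈ corner g) : Tendsto (fun n ↦ u n * y * u n) atTop (𝓝 y) := by
  rw [tendsto_iff_norm_sub_tendsto_zero]
  have h1 := tendsto_iff_norm_sub_tendsto_zero.1 (hu.tendsto_mul_left hg hy)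
  have h2 := tendsto_iff_norm_sub_tendsto_zero.1 (hu.tendsto_mul hy)
  refine squeeze_zero (fun n ↦ norm_nonneg _) (fun n ↦ ?_) (by simpa using h1.add h2)
  calc ‖u n * y * u n - y‖ = ‖(u n * y - y) * u n + (y * u n - y)‖ := by
        congr 1; noncomm_ring
    _ ≤ ‖(u n * y - y) * u n‖ + ‖y * u n - y‖ := norm_add_le _ _
    _ ≤ ‖u n * y - y‖ + ‖y * u n - y‖ := by
        gcongr
        exact (norm_mul_le _ _).trans (mul_le_of_le_one_right (norm_nonneg _) (hu.norm_le n))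

end IsLocalUnit

variable [PartialOrder E] [StarOrderedRing E]

lemma self_mem_corner {g : E} (hg : 0 ≤ g) : g ∈ corner g := by
  obtain ⟨u, v, hu⟩ := exists_isLocalUnit hg
  have h1 : ∀ n, g * u n ∈ corner g := fun n ↦ by
    have : g * u n = g * v n * g := by rw [hu.eq_mul_right n, mul_assoc]
    rw [this]
    exact conj_mem_corner g _
  exact (isClosed_corner g).mem_of_tendsto hu.tendsto (.of_forall h1)

/-- `closure (gEg)` is hereditary. -/
lemma mem_corner_of_le {g x y : E} (hg : 0 ≤ g) (hx : 0 ≤ x) (hxy : x ≤ y)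
    (hy : y ∈ corner g) : x ∈ corner g := by
  obtain ⟨u, v, hu⟩ := exists_isLocalUnit hg
  have hsa : IsSelfAdjoint g := .of_nonneg hg
  have key : ∀ (s : E) n, star (s - s * u n) * (s - s * u n) =
      star s * s - star s * s * u n - u n * (star s * s) + u n * (star s * s) * u n := by
    intro s n
    simp only [star_sub, star_mul, hu.star_eq]
    noncomm_ring
  obtain ⟨s, hs⟩ := CStarAlgebra.nonneg_iff_eq_star_mul_self.1 hx
  obtain ⟨t, ht⟩ := CStarAlgebra.nonneg_iff_eq_star_mul_self.1 (sub_nonneg.2 hxy)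
  -- The map `z ↦ (1 - u) z (1 - u)` is monotone, and it sends `star s * s` to
  -- `star (s - s u) * (s - s u)`; writing it out in `E` avoids the unitization.
  have hle : ∀ n, ‖s - s * u n‖ ^ 2 ≤ ‖y - y * u n - u n * y + u n * y * u n‖ := by
    intro n
    rw [sq, ← CStarRing.norm_star_mul_self]
    refine CStarAlgebra.norm_le_norm_of_nonneg_of_le (star_mul_self_nonneg _) ?_
    have h0 := star_mul_self_nonneg (t - t * u n)
    rw [key, ← ht] at h0
    rw [key, ← hs, ← sub_nonneg]
    convert h0 using 1
    noncomm_ring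
  have hlim : Tendsto (fun n ↦ ‖y - y * u n - u n * y + u n * y * u n‖) atTop (𝓝 0) := by
    simpa using (((tendsto_const_nhds (x := y)).sub (hu.tendsto_mul hy)).sub
      (hu.tendsto_mul_left hsa hy) |>.add (hu.tendsto_conj hsa hy)).norm
  have h2 : Tendsto (fun n ↦ ‖s - s * u n‖ ^ 2) atTop (𝓝 0) :=
    squeeze_zero (fun n ↦ by positivity) hle hlim
  have h3 : Tendsto (fun n ↦ s * u n) atTop (𝓝 s) := by
    rw [tendsto_iff_norm_sub_tendsto_zero]
    simpa [norm_sub_rev] using h2.sqrt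
  apply hu.mem_of_tendsto
  simpa [hs, hu.star_eq, mul_assoc] using h3.star.mul h3

lemma corner_subset_of_le {a g : E} (ha : 0 ≤ a) (hag : a ≤ g) :
    (corner a : Set E) ⊆ corner g := by
  have hg := ha.trans hag
  obtain ⟨u, v, hu⟩ := exists_isLocalUnit hg
  have hmem := mem_corner_of_le hg ha hag (self_mem_corner hg)
  rw [coe_corner a]
  refine closure_minimal ?_ (isClosed_corner g)
  rintro _ ⟨x, rfl⟩
  exact hu.mul_mul_mem (.of_nonneg hg) hmem hmem x

/-- The sum of a closed ideal and `closure (fEf)` is closed. -/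
lemma isClosed_ideal_add_corner (J : TwoSidedIdeal E) (hJ : IsClosed (J : Set E))
    {f : E} (hf : 0 ≤ f) : IsClosed ((J : Set E) + (corner f : Set E)) := by
  obtain ⟨u, v, hu⟩ := exists_isLocalUnit hf
  let J' : AddSubgroup E := AddSubgroup.ofClass J
  have hJ' : IsClosed (J' : Set E) := hJ
  have : CompleteSpace J' := hJ'.completeSpace_coe
  have : CompleteSpace (corner f) := (isClosed_corner f).completeSpace_coe
  let φ₀ : J' × corner f →+ E := J'.subtype.coprod (corner f).subtype
  let φ : NormedAddGroupHom (J' × corner f) E := φ₀.mkNormedAddGroupHom 2 fun p ↦ by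
    have h1 : ‖(p.1 : E)‖ ≤ ‖p‖ := norm_fst_le p
    have h2 : ‖(p.2 : E)‖ ≤ ‖p‖ := norm_snd_le p
    have h3 := norm_add_le (p.1 : E) (p.2 : E)
    change ‖(p.1 : E) + (p.2 : E)‖ ≤ _
    linarith
  have hφ : ∀ p, φ p = (p.1 : E) + (p.2 : E) := fun p ↦ rfl
  have hrange : (J : Set E) + (corner f : Set E) = (φ₀.range : Set E) := by
    ext y
    rw [Set.mem_add]
    constructor
    · rintro ⟨j, hj, b, hb, rfl⟩
      exact ⟨(⟨j, hj⟩, ⟨b, hb⟩), rfl⟩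
    · rintro ⟨⟨⟨j, hj⟩, ⟨b, hb⟩⟩, rfl⟩
      exact ⟨j, hj, b, hb, rfl⟩
  have hsurj : φ.SurjectiveOnWith φ₀.range 3 := by
    rintro _ ⟨⟨⟨j, hj⟩, ⟨b, hb⟩⟩, rfl⟩
    change ∃ p, φ p = j + b ∧ ‖p‖ ≤ 3 * ‖j + b‖
    rcases eq_or_ne (j + b) 0 with h0 | h0
    · exact ⟨0, by simp [h0], by simp⟩
    obtain ⟨n, hn⟩ := ((Metric.tendsto_nhds.1
      (hu.tendsto_conj (.of_nonneg hf) hb)) ‖j + b‖ (norm_pos_iff.2 h0)).exists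
    rw [dist_comm, dist_eq_norm] at hn
    have hjJ : u n * j * u n ∈ J := J.mul_mem_right _ _ (J.mul_mem_left _ _ hj)
    have hconj : ‖u n * (j + b) * u n‖ ≤ ‖j + b‖ :=
      (norm_mul_le _ _).trans <| (mul_le_of_le_one_right (norm_nonneg _) (hu.norm_le n)).trans <|
        (norm_mul_le _ _).trans (mul_le_of_le_one_left (norm_nonneg _) (hu.norm_le n))
    have hb2 : ‖b + u n * j * u n‖ ≤ 2 * ‖j + b‖ := by
      have : b + u n * j * u n = (b - u n * b * u n) + u n * (j + b) * u n := by noncomm_ring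
      rw [this]
      linarith [norm_add_le (b - u n * b * u n) (u n * (j + b) * u n)]
    have hj2 : ‖j - u n * j * u n‖ ≤ 3 * ‖j + b‖ := by
      have : j - u n * j * u n = (j + b) - (b + u n * j * u n) := by abel
      rw [this]
      linarith [norm_sub_le (j + b) (b + u n * j * u n)]
    refine ⟨(⟨j - u n * j * u n, J.sub_mem hj hjJ⟩,
      ⟨b + u n * j * u n, (corner f).add_mem hb (hu.conj_mem n j)⟩), ?_, ?_⟩
    · rw [hφ]
      simp
    · refine max_le hj2 (hb2.trans ?_)
      linarith [norm_nonneg (j + b)]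
  have hcl := controlled_closure_of_complete (by norm_num) one_pos hsurj
  rw [hrange]
  refine isClosed_of_closure_subset fun y hy ↦ ?_
  obtain ⟨p, hp, -⟩ := hcl y hy
  exact ⟨p, hp⟩

end HereditaryCorner

open HereditaryCorner

/-- Let `J` be a closed two-sided ideal of the C*-algebra `E`, let `h ∈ J` be
positive and strictly positive in `J`, and let `f ∈ E` be positive. Then
`J + closure(fEf) = closure((h+f)E(h+f))`; in particular `J + closure(fEf)` is a hereditary
subalgebra of `E`. -/
theorem ideal_plus_hereditary_eq_hereditary
    {E : Type*} [NonUnitalCStarAlgebra E] [PartialOrder E] [StarOrderedRing E]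
    (J : TwoSidedIdeal E) (hJclosed : IsClosed (J : Set E))
    (h : E) (h_pos : 0 ≤ h) (h_mem : h ∈ J)
    (h_strict : closure {y : E | ∃ x ∈ J, y = h * x * h} = (J : Set E))
    (f : E) (hf : 0 ≤ f) :
    (J : Set E) + closure {y : E | ∃ x : E, y = f * x * f} =
      closure {y : E | ∃ x : E, y = (h + f) * x * (h + f)} ∧
    (∀ x y : E, 0 ≤ x → x ≤ y →
      y ∈ (J : Set E) + closure {y : E | ∃ x : E, y = f * x * f} →
      x ∈ (J : Set E) + closure {y : E | ∃ x : E, y = f * x * f}) := by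
  have hle : h ≤ h + f := le_add_of_nonneg_right hf
  have hfle : f ≤ h + f := le_add_of_nonneg_left h_pos
  have hsum : 0 ≤ h + f := add_nonneg h_pos hf
  have heq : (J : Set E) + closure {y : E | ∃ x : E, y = f * x * f} =
      closure {y : E | ∃ x : E, y = (h + f) * x * (h + f)} := by
    rw [← coe_corner, ← coe_corner]
    apply Set.Subset.antisymm
    · rintro _ ⟨j, hj, b, hb, rfl⟩
      refine (corner (h + f)).add_mem ?_ (corner_subset_of_le hf hfle hb)
      apply corner_subset_of_le h_pos hle
      rw [coe_corner]
      rw [← h_strict] at hj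
      refine closure_mono ?_ hj
      rintro _ ⟨x, -, rfl⟩
      exact ⟨x, rfl⟩
    · rw [coe_corner (h + f)]
      refine closure_minimal ?_ (isClosed_ideal_add_corner J hJclosed hf)
      rintro _ ⟨x, rfl⟩
      refine ⟨h * (x * (h + f)) + f * x * h, ?_, f * x * f, conj_mem_corner f x, ?_⟩
      · exact J.add_mem (J.mul_mem_right _ _ h_mem) (J.mul_mem_left _ _ h_mem)
      · noncomm_ring
  refine ⟨heq, fun x y hx hxy hy ↦ ?_⟩
  rw [heq, ← coe_corner] at hy ⊢
  exact mem_corner_of_le hsum hx hxy hy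
end

section
/- Let E be a finite directed graph with no sinks and let V ⊆ E⁰ be hereditary. Then the saturation of V equals the set {v ∈ E⁰ : there exists n ≥ 0 such that r(μ) ∈ V for every path μ of length n with s(μ) = v}. -/
/-!
Say that `v` is absorbed at time `n` if every path of length `n` from `v` ends in `W`. Then `v` is
absorbed at time `0` iff `v ∈ W`, and at time `n + 1` iff the range of every edge out of `v` is
absorbed at time `n`.

Since there are no sinks, induction on `n` through this recursion shows that every absorbed vertex
lies in every saturated set containing `W`. Conversely, the set of vertices absorbed at some time
contains `W`, and it is saturated: because `W` is hereditary, absorption persists at later times, so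
the finitely many edges out of a vertex admit a common absorption time.
-/

/-- `IsPath s r v p w` : the list of edges `p` forms a path from `v` to `w` in the directed
graph with edge set `E`, vertex set `V`, source map `s` and range map `r`; the empty list is the
path of length `0` from `v` to `v`. -/
inductive IsPath {V E : Type*} (s r : E → V) : V → List E → V → Prop
  | nil (v : V) : IsPath s r v [] v
  | cons {u : V} (e : E) (p : List E) : IsPath s r (r e) p u → IsPath s r (s e) (e :: p) u

/-- A set of vertices is hereditary if it is closed under taking ranges of edges whose source
lies in the set. -/
def Hereditary {V E : Type*} (s r : E → V) (W : Set V) : Prop :=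
  ∀ e : E, s e ∈ W → r e ∈ W

/-- A set of vertices `W` is saturated if every vertex that emits at least one edge, all of whose
outgoing edges have range in `W`, belongs to `W`. -/
def Saturated {V E : Type*} (s r : E → V) (W : Set V) : Prop :=
  ∀ v : V, (∃ e : E, s e = v) → (∀ e : E, s e = v → r e ∈ W) → v ∈ W

/-- The saturation of a set of vertices: the smallest saturated set containing it. -/
def saturation {V E : Type*} (s r : E → V) (X : Set V) : Set V :=
  ⋂₀ {W : Set V | X ⊆ W ∧ Saturated s r W}

/-- `AbsorbedAt s r W n v`: every path of length `n` starting at `v` ends in `W`. -/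
def AbsorbedAt {V E : Type*} (s r : E → V) (W : Set V) (n : ℕ) (v : V) : Prop :=
  ∀ (p : List E) (w : V), IsPath s r v p w → p.length = n → w ∈ W

theorem absorbedAt_zero {V E : Type*} {s r : E → V} {W : Set V} {v : V} :
    AbsorbedAt s r W 0 v ↔ v ∈ W := by
  constructor
  · intro h
    exact h [] v (IsPath.nil v) rfl
  · intro h p w hp hl
    cases hp with
    | nil => exact h
    | cons e p hp => simp at hl

theorem absorbedAt_succ {V E : Type*} {s r : E → V} {W : Set V} {n : ℕ} {v : V} :
    AbsorbedAt s r W (n + 1) v ↔ ∀ e : E, s e = v → AbsorbedAt s r W n (r e) := by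
  constructor
  · rintro h e rfl p w hp hl
    exact h (e :: p) w (IsPath.cons e p hp) (by simp [hl])
  · intro h p w hp hl
    cases hp with
    | nil => simp at hl
    | cons e p hp => exact h e rfl p w hp (by simpa using hl)

theorem AbsorbedAt.succ {V E : Type*} {s r : E → V} {W : Set V} (hher : Hereditary s r W)
    {n : ℕ} {v : V} (h : AbsorbedAt s r W n v) : AbsorbedAt s r W (n + 1) v := by
  induction n generalizing v with
  | zero =>
    rw [absorbedAt_zero] at h
    rw [absorbedAt_succ]
    rintro e rfl
    exact absorbedAt_zero.2 (hher e h)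
  | succ n ih =>
    rw [absorbedAt_succ] at h ⊢
    exact fun e he => ih (h e he)

theorem AbsorbedAt.mono {V E : Type*} {s r : E → V} {W : Set V} (hher : Hereditary s r W)
    {m n : ℕ} {v : V} (hmn : m ≤ n) (h : AbsorbedAt s r W m v) : AbsorbedAt s r W n v :=
  Nat.le_induction h (fun _ _ ih => ih.succ hher) n hmn

theorem AbsorbedAt.mem_of_saturated {V E : Type*} {s r : E → V} {W U : Set V}
    (hnosinks : ∀ v : V, ∃ e : E, s e = v) (hWU : W ⊆ U) (hU : Saturated s r U)
    {n : ℕ} {v : V} (h : AbsorbedAt s r W n v) : v ∈ U := by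
  induction n generalizing v with
  | zero => exact hWU (absorbedAt_zero.1 h)
  | succ n ih => exact hU v (hnosinks v) fun e he => ih (absorbedAt_succ.1 h e he)

/-- Finiteness of `E` provides a uniform absorption time for all edges out of a vertex. -/
theorem saturated_absorbed {V E : Type*} [Fintype E] {s r : E → V} {W : Set V}
    (hher : Hereditary s r W) : Saturated s r {v | ∃ n, AbsorbedAt s r W n v} := by
  intro v _ h
  have h' : ∀ e : E, ∃ n, s e = v → AbsorbedAt s r W n (r e) := by
    intro e
    by_cases he : s e = v
    · obtain ⟨n, hn⟩ := h e he
      exact ⟨n, fun _ => hn⟩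
    · exact ⟨0, fun hv => absurd hv he⟩
  choose N hN using h'
  exact ⟨Finset.univ.sup N + 1, absorbedAt_succ.2 fun e he =>
    (hN e he).mono hher (Finset.le_sup (Finset.mem_univ e))⟩

/-- For a finite directed graph with no sinks and a hereditary set `W`, the
saturation of `W` is exactly the set of vertices `v` for which there exists `n ≥ 0` such that
every path of length `n` starting at `v` ends in `W`. -/
theorem saturation_eq_of_hereditary
    {V E : Type*} [Fintype V] [Fintype E] (s r : E → V)
    (hnosinks : ∀ v : V, ∃ e : E, s e = v)
    (W : Set V) (hher : Hereditary s r W) :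
    saturation s r W =
      {v : V | ∃ n : ℕ, ∀ (p : List E) (w : V), IsPath s r v p w → p.length = n → w ∈ W} := by
  apply Set.Subset.antisymm
  · exact Set.sInter_subset_of_mem
      ⟨fun v hv => ⟨0, absorbedAt_zero.2 hv⟩, saturated_absorbed hher⟩
  · rintro v ⟨n, hn⟩ U ⟨hWU, hU⟩
    exact AbsorbedAt.mem_of_saturated hnosinks hWU hU hn
end

section
/- Let E be a finite directed graph with a decomposition E⁰ = V₀ ⊔ V₁ ⊔ V₂ satisfying conditions (1)–(5). Then V₂ is hereditary, V₁ ∪ V₂ is a saturated hereditary subset of E⁰, and V₁ ∪ V₂ equals the saturation of V₂ in E. -/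
/-- `IsPathIn s r U v p w` : `p` is a path from `v` to `w` lying entirely in the subgraph over
the vertex set `U`. -/
def IsPathIn {V E : Type*} (s r : E → V) (U : Set V) (v : V) (p : List E) (w : V) : Prop :=
  IsPath s r v p w ∧ v ∈ U ∧ w ∈ U ∧ ∀ e ∈ p, s e ∈ U ∧ r e ∈ U

/-- `E_C` is a simple cycle: there is a cycle `μ = e₁⋯e_{|C|}` in the subgraph over `C`, with
pairwise distinct edges whose sources exhaust `C`, and whose edges are exactly the edges of the
subgraph over `C`. -/
def IsSimpleCycle {V E : Type*} (s r : E → V) (C : Set V) : Prop :=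
  ∃ (v : V) (p : List E), p ≠ [] ∧ IsPathIn s r C v p v ∧ p.Nodup ∧
    p.length = C.ncard ∧
    (∀ u ∈ C, ∃ e ∈ p, s e = u) ∧
    (∀ e : E, s e ∈ C → r e ∈ C → e ∈ p)

/-- `W` is saturated relative to the subgraph over `U`: every vertex of `U` emitting at least one
edge of the subgraph over `U`, all of whose edges within the subgraph have range in `W`, lies in
`W`. -/
def SaturatedIn {V E : Type*} (s r : E → V) (U W : Set V) : Prop :=
  ∀ v ∈ U, (∃ e : E, s e = v ∧ r e ∈ U) →
    (∀ e : E, s e = v → r e ∈ U → r e ∈ W) → v ∈ W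

/-- The saturation of `X`, computed within the subgraph over `U`: the smallest subset of `U`
containing `X` that is saturated relative to the subgraph over `U`. -/
def saturationIn {V E : Type*} (s r : E → V) (U X : Set V) : Set V :=
  ⋂₀ {W : Set V | X ⊆ W ∧ W ⊆ U ∧ SaturatedIn s r U W}

/-- A decomposition `E⁰ = V₀ ⊔ V₁ ⊔ V₂` of the vertex set of a directed graph satisfying
conditions (1)–(5) of Proposition 5.2. -/
structure GraphDecomposition {V E : Type*} (s r : E → V) (V₀ V₁ V₂ : Set V) : Prop where
  /-- `V₀ ∪ V₁ ∪ V₂ = E⁰`. -/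
  cover : V₀ ∪ V₁ ∪ V₂ = Set.univ
  /-- The three pieces are pairwise disjoint. -/
  disj01 : Disjoint V₀ V₁
  disj02 : Disjoint V₀ V₂
  disj12 : Disjoint V₁ V₂
  /-- (1) The subgraph over `V₀` is the saturation, computed within that subgraph, of a nonempty
  disjoint union of sets `C` with `E_C` a simple cycle. -/
  cond1 : ∃ 𝒞 : Set (Set V), 𝒞.Nonempty ∧
    (∀ C ∈ 𝒞, C ⊆ V₀ ∧ IsSimpleCycle s r C) ∧
    𝒞.Pairwise Disjoint ∧
    V₀ = saturationIn s r V₀ (⋃₀ 𝒞)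
  /-- (2) The subgraph over `V₁` contains no cycles. -/
  cond2 : ∀ (v : V) (p : List E), p ≠ [] → ¬IsPathIn s r V₁ v p v
  /-- (3) The subgraph over `V₂` is strongly connected, ... -/
  cond3a : ∀ v ∈ V₂, ∀ w ∈ V₂, ∃ p : List E, IsPathIn s r V₂ v p w
  /-- ... has at least one edge, ... -/
  cond3b : ∃ e : E, s e ∈ V₂ ∧ r e ∈ V₂
  /-- ... and is not a simple cycle. -/
  cond3c : ¬IsSimpleCycle s r V₂
  /-- (4) There is no path from `V₁` into `V₀`. -/
  cond4a : ∀ (v : V) (p : List E) (w : V), IsPath s r v p w → v ∈ V₁ → w ∉ V₀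
  /-- (4) There is no path from `V₂` into `V₀ ∪ V₁`. -/
  cond4b : ∀ (v : V) (p : List E) (w : V), IsPath s r v p w → v ∈ V₂ → w ∉ V₀ ∪ V₁
  /-- (5) Every vertex of `V₀ ∪ V₁` has a path into `V₂`. -/
  cond5 : ∀ v ∈ V₀ ∪ V₁, ∃ (p : List E) (w : V), IsPath s r v p w ∧ w ∈ V₂

/-- `EdgeIn s r U w v`: the subgraph over `U` has an edge from `v` to `w`. The target comes first,
so that well-foundedness means that there are no infinite forward walks. -/
def EdgeIn {V E : Type*} (s r : E → V) (U : Set V) (w v : V) : Prop :=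
  ∃ e : E, s e = v ∧ r e = w ∧ v ∈ U ∧ w ∈ U

theorem isPath_single {V E : Type*} (s r : E → V) (e : E) : IsPath s r (s e) [e] (r e) :=
  IsPath.cons e [] (IsPath.nil _)

theorem exists_isPathIn_of_transGen {V E : Type*} {s r : E → V} {U : Set V} {w v : V}
    (h : Relation.TransGen (EdgeIn s r U) w v) : ∃ p : List E, p ≠ [] ∧ IsPathIn s r U v p w := by
  induction h with
  | single h =>
    obtain ⟨e, rfl, rfl, hs, hr⟩ := h
    exact ⟨[e], by simp, isPath_single s r e, hs, hr, by simp [hs, hr]⟩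
  | tail _ h ih =>
    obtain ⟨e, rfl, rfl, hs, hr⟩ := h
    obtain ⟨p, -, hp, -, hw, hpU⟩ := ih
    exact ⟨e :: p, by simp, IsPath.cons e p hp, hs, hw, List.forall_mem_cons.2 ⟨⟨hs, hr⟩, hpU⟩⟩

theorem wellFounded_edgeIn {V E : Type*} [Finite V] {s r : E → V} {U : Set V}
    (hU : ∀ (v : V) (p : List E), p ≠ [] → ¬IsPathIn s r U v p v) :
    WellFounded (EdgeIn s r U) := by
  have : Std.Irrefl (Relation.TransGen (EdgeIn s r U)) := ⟨fun v h => by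
    obtain ⟨p, hne, hp⟩ := exists_isPathIn_of_transGen h
    exact hU v p hne hp⟩
  have hwf := Finite.wellFounded_of_trans_of_irrefl (Relation.TransGen (EdgeIn s r U))
  exact Subrelation.wf (fun h => Relation.TransGen.single h) hwf

theorem exists_edge_mem_V₀ {V E : Type*} {s r : E → V} {V₀ V₁ V₂ : Set V}
    (hdec : GraphDecomposition s r V₀ V₁ V₂) {v : V} (hv : v ∈ V₀) :
    ∃ e : E, s e = v ∧ r e ∈ V₀ := by
  obtain ⟨𝒞, -, h𝒞, -, hsat⟩ := hdec.cond1
  rw [hsat] at hv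
  refine (hv {u | u ∈ V₀ ∧ ∃ e : E, s e = u ∧ r e ∈ V₀}
    ⟨?_, fun u hu => hu.1, fun u hu he _ => ⟨hu, he⟩⟩).2
  rintro u ⟨C, hC, hu⟩
  obtain ⟨hC₀, x, p, -, ⟨-, -, -, hpC⟩, -, -, hsrc, -⟩ := h𝒞 C hC
  obtain ⟨e, he, rfl⟩ := hsrc u hu
  exact ⟨hC₀ hu, e, rfl, hC₀ (hpC e he).2⟩

/-- For a finite directed graph with a decomposition `E⁰ = V₀ ⊔ V₁ ⊔ V₂`
satisfying conditions (1)–(5): `V₂` is hereditary, `V₁ ∪ V₂` is saturated and hereditary, and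
`V₁ ∪ V₂` equals the saturation of `V₂` in `E`. -/
theorem decomposition_saturation
    {V E : Type*} [Fintype V] [Fintype E] (s r : E → V)
    (V₀ V₁ V₂ : Set V) (hdec : GraphDecomposition s r V₀ V₁ V₂) :
    Hereditary s r V₂ ∧
    Saturated s r (V₁ ∪ V₂) ∧ Hereditary s r (V₁ ∪ V₂) ∧
    V₁ ∪ V₂ = saturation s r V₂ := by
  have hcov : ∀ v, v ∈ V₀ ∨ v ∈ V₁ ∨ v ∈ V₂ := fun v => by
    have : v ∈ V₀ ∪ V₁ ∪ V₂ := hdec.cover ▸ Set.mem_univ v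
    simpa [or_assoc] using this
  have her₂ : Hereditary s r V₂ := fun e he => by
    have h := hdec.cond4b _ _ _ (isPath_single s r e) he
    simp only [Set.mem_union, not_or] at h
    have := hcov (r e)
    tauto
  have her : Hereditary s r (V₁ ∪ V₂) := by
    rintro e (he | he)
    · exact (hcov (r e)).resolve_left (hdec.cond4a _ _ _ (isPath_single s r e) he)
    · exact Or.inr (her₂ e he)
  have hsat : Saturated s r (V₁ ∪ V₂) := by
    intro v _ hall
    refine (hcov v).resolve_left fun hv => ?_
    obtain ⟨e, hes, her₀⟩ := exists_edge_mem_V₀ hdec hv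
    rcases hall e hes with h | h
    · exact Set.disjoint_left.1 hdec.disj01 her₀ h
    · exact Set.disjoint_left.1 hdec.disj02 her₀ h
  refine ⟨her₂, hsat, her, Set.Subset.antisymm ?_ ?_⟩
  · rintro v hv W ⟨hW, hWsat⟩
    rcases hv with hv | hv
    · induction v using (wellFounded_edgeIn hdec.cond2).induction with
      | _ v ih =>
        refine hWsat v ?_ fun e he => ?_
        · obtain ⟨p, w, hp, hw⟩ := hdec.cond5 v (Or.inr hv)
          cases hp with
          | nil => exact (Set.disjoint_left.1 hdec.disj12 hv hw).elim
          | cons e p _ => exact ⟨e, rfl⟩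
        · rcases her e (Or.inl (he ▸ hv)) with h | h
          · exact ih _ ⟨e, he, rfl, hv, h⟩ h
          · exact hW h
    · exact hW hv
  · exact Set.sInter_subset_of_mem ⟨Set.subset_union_right, hsat⟩
end

section
/- Let E be a finite directed graph with a decomposition E⁰ = V₀ ⊔ V₁ ⊔ V₂ satisfying conditions (1)–(5). Then E has no sinks, and every cycle in E has an exit. -/
section Paths

variable {V E : Type*} {s r : E → V}

theorem IsPath.exists_edge {v u : V} {p : List E} (h : IsPath s r v p u) (hp : p ≠ []) :
    ∃ e ∈ p, s e = v := by
  cases h with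
  | nil => exact absurd rfl hp
  | cons e p h => exact ⟨e, by simp, rfl⟩

theorem IsPath.split {v u : V} {p : List E} (h : IsPath s r v p u) {e : E} (he : e ∈ p) :
    ∃ a b, p = a ++ e :: b ∧ IsPath s r v a (s e) ∧ IsPath s r (r e) b u := by
  induction h with
  | nil => simp at he
  | cons f p h ih =>
    rcases List.mem_cons.1 he with rfl | he
    · exact ⟨[], p, rfl, .nil _, h⟩
    · obtain ⟨a, b, rfl, ha, hb⟩ := ih he
      exact ⟨f :: a, b, rfl, .cons f a ha, hb⟩

/-- Cutting out the loops between repeated edges turns a path into one with distinct edges, which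
still has positive length if the original path had. -/
theorem IsPath.exists_nodup {v u : V} {p : List E} (h : IsPath s r v p u) :
    ∃ q, IsPath s r v q u ∧ q.Nodup ∧ (p ≠ [] → q ≠ []) := by
  induction h with
  | nil v => exact ⟨[], .nil v, List.nodup_nil, id⟩
  | cons e p h ih =>
    obtain ⟨q, hq, hnd, -⟩ := ih
    by_cases he : e ∈ q
    · obtain ⟨a, b, rfl, -, hb⟩ := hq.split he
      exact ⟨e :: b, .cons e b hb, hnd.of_append_right, by simp⟩
    · exact ⟨e :: q, .cons e q hq, List.nodup_cons.2 ⟨he, hnd⟩, by simp⟩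

theorem Hereditary.mem_of_isPath {W : Set V} (hW : Hereditary s r W) {v u : V} {p : List E}
    (h : IsPath s r v p u) (hv : v ∈ W) : u ∈ W := by
  induction h with
  | nil => exact hv
  | cons e p h ih => exact ih (hW e hv)

/-- The sources of the edges of a cycle without exit form a hereditary set. -/
theorem sources_closed {v : V} {p : List E} (h : IsPath s r v p v)
    (hex : ∀ e, ∀ e' ∈ p, s e = s e' → e = e') : Hereditary s r {u | ∃ e ∈ p, s e = u} := by
  rintro e ⟨e', he', hs⟩
  obtain rfl := hex e e' he' hs.symm
  obtain ⟨a, b, hab, -, hb⟩ := h.split he'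
  by_cases hbn : b = []
  · subst hbn
    generalize r e = w at hb ⊢
    cases hb
    exact h.exists_edge (List.ne_nil_of_mem he')
  · obtain ⟨f, hf, hfs⟩ := hb.exists_edge hbn
    exact ⟨f, by simp [hab, hf], hfs⟩

end Paths

/-- A finite directed graph with a decomposition `E⁰ = V₀ ⊔ V₁ ⊔ V₂`
satisfying conditions (1)–(5) has no sinks, and every cycle in it has an exit. -/
theorem decomposition_no_sinks_and_cycles_have_exits
    {V E : Type*} [Fintype V] [Fintype E] (s r : E → V)
    (V₀ V₁ V₂ : Set V) (hdec : GraphDecomposition s r V₀ V₁ V₂) :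
    (∀ v : V, ∃ e : E, s e = v) ∧
    (∀ (v : V) (p : List E), p ≠ [] → IsPath s r v p v →
      ∃ (e e' : E), e' ∈ p ∧ s e = s e' ∧ e ≠ e') := by
  have hcov (v : V) : v ∈ V₀ ∪ V₁ ∨ v ∈ V₂ := by
    have : v ∈ V₀ ∪ V₁ ∪ V₂ := hdec.cover ▸ Set.mem_univ v
    exact this
  have hnot (v : V) (h : v ∈ V₀ ∪ V₁) : v ∉ V₂ := by
    rcases h with h | h
    · exact Set.disjoint_left.1 hdec.disj02 h
    · exact Set.disjoint_left.1 hdec.disj12 h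
  have hher : Hereditary s r V₂ := fun e he =>
    (hcov (r e)).resolve_left (hdec.cond4b (s e) [e] (r e) (.cons e [] (.nil _)) he)
  refine ⟨fun v => ?_, fun v p hp hpath => ?_⟩
  · rcases hcov v with hv | hv
    · obtain ⟨p, w, hpw, hw⟩ := hdec.cond5 v hv
      cases hpw with
      | nil => exact absurd hw (hnot v hv)
      | cons e p h => exact ⟨e, rfl⟩
    · obtain ⟨e, he, -⟩ := hdec.cond3b
      obtain ⟨p, hpw, -⟩ := hdec.cond3a v hv (s e) he
      generalize hw : s e = w at hpw
      cases hpw with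
      | nil => exact ⟨e, hw⟩
      | cons f p h => exact ⟨f, rfl⟩
  · by_contra! hno
    have hex : ∀ e, ∀ e' ∈ p, s e = s e' → e = e' := hno
    have hv : v ∈ V₂ := by
      rcases hcov v with hv | hv
      · obtain ⟨q, w, hq, hw⟩ := hdec.cond5 v hv
        obtain ⟨e, he, rfl⟩ :=
          (sources_closed hpath hex).mem_of_isPath hq (hpath.exists_edge hp)
        -- The rest of the cycle leads from `s e ∈ V₂` back to `v`.
        obtain ⟨a, b, -, -, hb⟩ := hpath.split he
        exact hher.mem_of_isPath (.cons e b hb) hw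
      · exact hv
    have huniq (e e' : E) (he' : s e' ∈ V₂) (h : s e = s e') : e = e' := by
      obtain ⟨q, hq, -⟩ := hdec.cond3a v hv _ he'
      obtain ⟨f, hf, hfs⟩ :=
        (sources_closed hpath hex).mem_of_isPath hq (hpath.exists_edge hp)
      rw [hex e f hf (h.trans hfs.symm), hex e' f hf hfs.symm]
    obtain ⟨q, hq, hnd, hne⟩ := hpath.exists_nodup
    have hqne := hne hp
    have hsrc (e : E) (he : e ∈ q) : s e ∈ V₂ := by
      obtain ⟨a, b, -, ha, -⟩ := hq.split he
      exact hher.mem_of_isPath ha hv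
    have hall (u : V) (hu : u ∈ V₂) : ∃ e ∈ q, s e = u := by
      obtain ⟨a, ha, -⟩ := hdec.cond3a v hv u hu
      exact (sources_closed hq fun e e' he' => huniq e e' (hsrc e' he')).mem_of_isPath ha
        (hq.exists_edge hqne)
    refine hdec.cond3c ⟨v, q, hqne, ⟨hq, hv, hv, fun e he => ⟨hsrc e he, hher e (hsrc e he)⟩⟩,
      hnd, ?_, hall, fun e he _ => ?_⟩
    · classical
      have hV : V₂ = ((q.map s).toFinset : Set V) := by
        ext u
        simp only [List.coe_toFinset, List.mem_map, Set.mem_ofPred_eq]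
        exact ⟨hall u, by rintro ⟨e, he, rfl⟩; exact hsrc e he⟩
      have hnd' : (q.map s).Nodup :=
        List.Nodup.map_on (fun e _ e' he' h => huniq e e' (hsrc e' he') h) hnd
      rw [hV, Set.ncard_coe_finset, List.toFinset_card_of_nodup hnd', List.length_map]
    · obtain ⟨f, hf, hfs⟩ := hall _ he
      rwa [huniq e f (hsrc f hf) hfs.symm]
end

section
/- Let E be a directed graph, let W ⊆ E⁰ be saturated and hereditary, and let v ∈ W be a vertex lying on a cycle of the subgraph E_W (i.e. there is a cycle μ in E_W with s(μ) = v). Then K := W \ {w ∈ W : there is a path in E_W from w to v} is a saturated hereditary subset of E⁰. -/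
/-- The first edge of a path of positive length in `E_U` starts at the source of the path, and the
remaining edges form a path in `E_U`. -/
theorem IsPathIn.exists_first_edge {V E : Type*} {s r : E → V} {U : Set V} {w v : V}
    {p : List E} (h : IsPathIn s r U w p v) (hp : p ≠ []) :
    ∃ (e : E) (q : List E), s e = w ∧ IsPathIn s r U (r e) q v := by
  obtain ⟨hpath, -, hv, hU⟩ := h
  cases hpath with
  | nil => exact absurd rfl hp
  | cons e q hq =>
    exact ⟨e, q, rfl, hq, (hU e (by simp)).2, hv, fun f hf => hU f (by simp [hf])⟩

theorem IsPathIn.cons {V E : Type*} {s r : E → V} {U : Set V} {v : V} {e : E} {q : List E}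
    (he : s e ∈ U) (h : IsPathIn s r U (r e) q v) : IsPathIn s r U (s e) (e :: q) v := by
  obtain ⟨hq, hre, hv, hU⟩ := h
  refine ⟨.cons e q hq, he, hv, fun f hf => ?_⟩
  rcases List.mem_cons.1 hf with rfl | hf
  · exact ⟨he, hre⟩
  · exact hU f hf

/-- Let `W` be saturated and hereditary and let `v ∈ W` lie on a cycle of the
subgraph `E_W`. Then `K = W \ {w ∈ W : there is a path in E_W from w to v}` is a saturated
hereditary subset of the vertex set. -/
theorem saturated_hereditary_complement_of_reach
    {V E : Type*} (s r : E → V) (W : Set V)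
    (hsat : Saturated s r W) (hher : Hereditary s r W)
    (v : V) (hvW : v ∈ W)
    (hcycle : ∃ p : List E, p ≠ [] ∧ IsPathIn s r W v p v) :
    Saturated s r (W \ {w : V | w ∈ W ∧ ∃ p : List E, IsPathIn s r W w p v}) ∧
    Hereditary s r (W \ {w : V | w ∈ W ∧ ∃ p : List E, IsPathIn s r W w p v}) := by
  constructor
  · intro w hw hr
    refine ⟨hsat w hw fun e he => (hr e he).1, ?_⟩
    rintro ⟨-, p, hp⟩
    have hstep : ∃ (e : E) (q : List E), s e = w ∧ IsPathIn s r W (r e) q v := by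
      by_cases hnil : p = []
      · -- A trivial path means `w = v`, so the cycle provides the edge.
        subst hnil
        obtain ⟨c, hc, hcv⟩ := hcycle
        cases hp.1
        exact hcv.exists_first_edge hc
      · exact hp.exists_first_edge hnil
    obtain ⟨e, q, he, hq⟩ := hstep
    exact (hr e he).2 ⟨(hr e he).1, q, hq⟩
  · rintro e ⟨heW, hne⟩
    exact ⟨hher e heW, fun ⟨_, q, hq⟩ => hne ⟨heW, e :: q, hq.cons heW⟩⟩
end

section
/- Let E be a finite directed graph with no sinks in which no cycle has an exit. Then every vertex of E belongs to the saturation of the set of vertices that lie on a cycle; equivalently, that saturation is all of E⁰. -/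
/-- Following a chosen edge `g u` out of each vertex `u` for `n` steps traces a path of
length `n`. -/
theorem exists_path_iterate {V E : Type*} (s r : E → V) (g : V → E) (hg : ∀ u, s (g u) = u)
    (n : ℕ) (v : V) :
    ∃ p : List E, p.length = n ∧ IsPath s r v p ((fun u => r (g u))^[n] v) := by
  induction n generalizing v with
  | zero => exact ⟨[], rfl, IsPath.nil v⟩
  | succ n ih =>
    obtain ⟨p, hlen, hp⟩ := ih (r (g v))
    have hcons := IsPath.cons (g v) p hp
    rw [hg v] at hcons
    exact ⟨g v :: p, by simp [hlen], hcons⟩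

/-- In a finite directed graph with no sinks in which no cycle has an exit,
every vertex belongs to the saturation of the set of vertices lying on a cycle. -/
theorem saturation_of_cycle_vertices_eq_univ
    {V E : Type*} [Fintype V] [Fintype E] (s r : E → V)
    (hnosinks : ∀ v : V, ∃ e : E, s e = v)
    (hnoexit : ∀ (v : V) (p : List E), p ≠ [] → IsPath s r v p v →
      ¬∃ (e e' : E), e' ∈ p ∧ s e = s e' ∧ e ≠ e') :
    saturation s r {v : V | ∃ p : List E, p ≠ [] ∧ IsPath s r v p v} = Set.univ := by
  refine Set.eq_univ_of_forall fun v => ?_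
  rintro W ⟨hcycle, hsat⟩
  by_contra hv
  have hstep : ∀ u : V, ∃ e : E, s e = u ∧ (u ∉ W → r e ∉ W) := by
    intro u
    by_cases hu : u ∈ W
    · obtain ⟨e, he⟩ := hnosinks u
      exact ⟨e, he, fun h => absurd hu h⟩
    · by_contra! hcon
      exact hu (hsat u (hnosinks u) fun e he => by
        by_contra hr
        exact hr (hcon e he).2)
  choose g hg hgW using hstep
  have hout : ∀ n, (fun u => r (g u))^[n] v ∉ W := by
    intro n
    induction n with
    | zero => exact hv
    | succ n ih =>
      rw [Function.iterate_succ_apply']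
      exact hgW _ ih
  obtain ⟨m, n, hmn, heq⟩ : ∃ m n : ℕ, m < n ∧
      (fun u => r (g u))^[m] v = (fun u => r (g u))^[n] v := by
    obtain ⟨m, n, hne, heq⟩ :=
      Finite.exists_ne_map_eq_of_infinite fun n : ℕ => (fun u => r (g u))^[n] v
    rcases lt_or_gt_of_ne hne with h | h
    · exact ⟨m, n, h, heq⟩
    · exact ⟨n, m, h, heq.symm⟩
  obtain ⟨p, hlen, hp⟩ := exists_path_iterate s r g hg (n - m) ((fun u => r (g u))^[m] v)
  rw [← Function.iterate_add_apply, Nat.sub_add_cancel hmn.le, ← heq] at hp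
  refine hout m (hcycle ⟨p, ?_, hp⟩)
  rintro rfl
  simp only [List.length_nil] at hlen
  omega
end

section
/- Let E be a finite directed graph with a decomposition E⁰ = V₀ ⊔ V₁ ⊔ V₂ satisfying conditions (1)–(5). Then there exists a vertex w ∈ V₂ such that the set of paths μ = e₁⋯eₙ in E of length n ≥ 1 with r(μ) = w and s(eₙ) ∉ V₂ is infinite. -/
theorem IsPath.append {V E : Type*} {s r : E → V} {u v w : V} {p q : List E}
    (hp : IsPath s r u p v) (hq : IsPath s r v q w) : IsPath s r u (p ++ q) w := by
  induction hp with
  | nil => exact hq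
  | cons e p _ ih => exact .cons e _ (ih hq)

theorem IsPath.flatten_replicate {V E : Type*} {s r : E → V} {v : V} {c : List E}
    (hc : IsPath s r v c v) (n : ℕ) : IsPath s r v (List.replicate n c).flatten v := by
  induction n with
  | zero => exact .nil v
  | succ n ih => simpa [List.replicate_succ] using hc.append ih

/-- A path from outside `W` into `W`, cut off at its first vertex in `W`, ends with an edge whose
source is outside `W`. -/
theorem IsPath.exists_first_entry {V E : Type*} {s r : E → V} {W : Set V} {v u : V} {p : List E}
    (hp : IsPath s r v p u) (hv : v ∉ W) (hu : u ∈ W) :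
    ∃ w ∈ W, ∃ q : List E, IsPath s r v q w ∧ ∃ e : E, q.getLast? = some e ∧ s e ∉ W := by
  induction hp with
  | nil => exact absurd hu hv
  | cons e p _ ih =>
    by_cases hr : r e ∈ W
    · exact ⟨r e, hr, [e], .cons e [] (.nil _), e, rfl, hv⟩
    · obtain ⟨w, hw, q, hq, f, hf, hfW⟩ := ih hr hu
      exact ⟨w, hw, e :: q, .cons e q hq, f, by simp [List.getLast?_cons, hf], hfW⟩

/-- For a finite directed graph with a decomposition `E⁰ = V₀ ⊔ V₁ ⊔ V₂`
satisfying conditions (1)–(5), there is a vertex `w ∈ V₂` receiving infinitely many paths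
`μ = e₁⋯eₙ` of positive length with `r(μ) = w` and `s(eₙ) ∉ V₂`. -/
theorem decomposition_infinitely_many_entering_paths
    {V E : Type*} [Fintype V] [Fintype E] (s r : E → V)
    (V₀ V₁ V₂ : Set V) (hdec : GraphDecomposition s r V₀ V₁ V₂) :
    ∃ w ∈ V₂, {p : List E | ∃ v : V, IsPath s r v p w ∧ p ≠ [] ∧
      ∃ e : E, p.getLast? = some e ∧ s e ∉ V₂}.Infinite := by
  obtain ⟨𝒞, ⟨C, hC⟩, hcyc, -, -⟩ := hdec.cond1
  obtain ⟨hCV, v, c, hc, ⟨hcp, hvC, -, -⟩, -⟩ := hcyc C hC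
  have hv₀ : v ∈ V₀ := hCV hvC
  obtain ⟨p, u, hp, hu⟩ := hdec.cond5 v (Or.inl hv₀)
  obtain ⟨w, hw, q, hq, e, he, heV⟩ :=
    hp.exists_first_entry (Set.disjoint_left.mp hdec.disj02 hv₀) hu
  refine ⟨w, hw, Set.infinite_of_injective_forall_mem
    (f := fun n : ℕ => (List.replicate n c).flatten ++ q) ?_ ?_⟩
  · intro m n hmn
    have h := congrArg List.length hmn
    simpa [hc] using h
  · intro n
    have hlast : ((List.replicate n c).flatten ++ q).getLast? = some e := by
      simp [List.getLast?_append, he]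
    refine ⟨v, (hcp.flatten_replicate n).append hq, ?_, e, hlast, heV⟩
    intro h
    simp only [h, List.getLast?_nil, reduceCtorEq] at hlast
end

section
/- Let E be a directed graph whose only saturated hereditary subsets of E⁰ are ∅ and E⁰, and let v ∈ E⁰ be a vertex lying on a cycle. Then for every vertex w ∈ E⁰ there is a path μ in E with s(μ) = w and r(μ) = v. -/
/-- If the only saturated hereditary subsets of the vertex set are `∅` and the
whole vertex set, and `v` lies on a cycle, then every vertex has a path to `v`. -/
theorem path_to_cycle_vertex_of_cofinal
    {V E : Type*} (s r : E → V)
    (hsimple : ∀ W : Set V, Saturated s r W → Hereditary s r W → W = ∅ ∨ W = Set.univ)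
    (v : V) (hv : ∃ p : List E, p ≠ [] ∧ IsPath s r v p v) :
    ∀ w : V, ∃ p : List E, IsPath s r w p v := by
  -- `W` is the set of vertices from which `v` cannot be reached.
  let W : Set V := {u | ¬ ∃ p : List E, IsPath s r u p v}
  have hher : Hereditary s r W := by
    rintro e he ⟨p, hp⟩
    exact he ⟨e :: p, .cons e p hp⟩
  have hsat : Saturated s r W := by
    rintro u - hall ⟨p, hp⟩
    cases hp with
    | nil =>
      -- Here `u = v`, and the first edge of the cycle leads to a vertex that reaches `v`.
      obtain ⟨q, hq, hcyc⟩ := hv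
      generalize hx : v = x at hcyc hall
      cases hcyc with
      | nil => exact hq rfl
      | cons e q' h => exact hall e rfl ⟨q', hx ▸ h⟩
    | cons e p' h => exact hall e rfl ⟨p', h⟩
  have hvW : v ∉ W := fun h => h ⟨[], .nil v⟩
  intro w
  rcases hsimple W hsat hher with h | h
  · by_contra hw
    exact (h ▸ (show w ∈ W from hw) : w ∈ (∅ : Set V))
  · exact absurd (h ▸ Set.mem_univ v) hvW
end
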